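/- arXiv:math/0306246 — 3 statements merged into one kernel-verified Lean document; each statement's English description precedes it below -/
import Mathlib

section
/- Let V_r^+ := φ({v ∈ C^{r+1}_* : v_{r+1} = +1}) and let Z_{r,m}^+ be an m-element subset of V_r^+ chosen uniformly at random. Then α(r+1, m) = (1/2^m) · E[χ(Z_{r,m}^+)]. -/
open Finset Filter MeasureTheory

open scoped Classical

noncomputable section

/-- The vertex set `{0,1}^d` of the 0/1-cube, as a finite subset of `ℝ^d`. -/
def cube01 (d : ℕ) : Finset (Fin d → ℝ) :=
  (Finset.univ : Finset (Fin d → Bool)).image (fun f i => if f i then 1 else 0)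

/-- The vertex set `{-1,+1}^d` of the `±1`-cube, as a finite subset of `ℝ^d`. -/
def pmCube (d : ℕ) : Finset (Fin d → ℝ) :=
  (Finset.univ : Finset (Fin d → Bool)).image (fun f i => if f i then 1 else -1)

/-- The all-one vector `𝟙 ∈ ℝ^d`. -/
def allOne (d : ℕ) : Fin d → ℝ := fun _ => 1

/-- `C^d_* = {-1,+1}^d \ {-𝟙, 𝟙}`. -/
def pmCubeStar (d : ℕ) : Finset (Fin d → ℝ) :=
  (pmCube d) \ {-(allOne d), allOne d}

/-- `{v,w}` spans an edge (a one-dimensional face) of the polytope `P`: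
`v ≠ w` and the segment `[v,w]` is an (exposed) face of `P`. -/
def IsEdge {d : ℕ} (P : Set (Fin d → ℝ)) (v w : Fin d → ℝ) : Prop :=
  v ≠ w ∧ IsExposed ℝ P (segment ℝ v w)

/-- The number of edges of the graph of the polytope `conv X`. -/
noncomputable def edgeCount {d : ℕ} (X : Finset (Fin d → ℝ)) : ℕ :=
  ((X.powersetCard 2).filter (fun e =>
      ∃ v w, e = {v, w} ∧ IsEdge (convexHull ℝ (X : Set (Fin d → ℝ))) v w)).card

/-- The density of the graph of the polytope `conv X` (whose vertex set is `X`
when `X` consists of 0/1- or `±1`-points): number of edges divided by `C(|X|,2)`. -/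
noncomputable def graphDensity {d : ℕ} (X : Finset (Fin d → ℝ)) : ℝ :=
  (edgeCount X : ℝ) / (X.card.choose 2 : ℝ)

/-- The expected graph-density of the convex hull of a uniformly random
`n`-element subset of `{0,1}^d`. -/
noncomputable def expDensity (d n : ℕ) : ℝ :=
  (∑ X ∈ (cube01 d).powersetCard n, graphDensity X) /
    (((cube01 d).powersetCard n).card : ℝ)

/-- The Hamming distance of `v, w ∈ ℝ^d`. -/
def hdist {d : ℕ} (v w : Fin d → ℝ) : ℕ :=
  (Finset.univ.filter (fun i => v i ≠ w i)).card

/-- `C(v,w)`: the points of the `±1`-cube agreeing with `v` and `w` wherever these agree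
(the vertex set of the smallest face of the cube containing `v` and `w`). -/
def cubeFace {d : ℕ} (v w : Fin d → ℝ) : Finset (Fin d → ℝ) :=
  (pmCube d).filter (fun x => ∀ i, v i = w i → x i = v i)

/-- `C_*(v,w) = C(v,w) \ {v,w}`. -/
def cubeFaceStar {d : ℕ} (v w : Fin d → ℝ) : Finset (Fin d → ℝ) :=
  (cubeFace v w) \ {v, w}

/-- The long-edge probability `τ(k,m)`: the probability that for a uniformly random
`m`-element subset `Y ⊆ C^k_*`, `conv Y ∩ conv{-𝟙,𝟙} = ∅`. -/
noncomputable def tau (k m : ℕ) : ℝ :=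
  ((((pmCubeStar k).powersetCard m).filter (fun Y =>
      convexHull ℝ (Y : Set (Fin k → ℝ)) ∩ segment ℝ (-(allOne k)) (allOne k) = ∅)).card : ℝ) /
    ((((pmCubeStar k).powersetCard m)).card : ℝ)

/-- `Y ∩ (-Y) = ∅`. -/
def NoAntipodal {k : ℕ} (Y : Finset (Fin k → ℝ)) : Prop := ∀ y ∈ Y, -y ∉ Y

/-- `α(k,m)`: the conditional probability that `conv Y ∩ conv{-𝟙,𝟙} = ∅`
given `Y ∩ (-Y) = ∅`, for a uniformly random `m`-element subset `Y ⊆ C^k_*`. -/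
noncomputable def alpha (k m : ℕ) : ℝ :=
  ((((pmCubeStar k).powersetCard m).filter (fun (Y : Finset (Fin k → ℝ)) =>
      convexHull ℝ (Y : Set (Fin k → ℝ)) ∩ segment ℝ (-(allOne k)) (allOne k) = ∅ ∧
        NoAntipodal Y)).card : ℝ) /
    ((((pmCubeStar k).powersetCard m).filter (fun Y => NoAntipodal Y)).card : ℝ)

/-- The sample space for a uniformly random `n`-element subset `X ⊆ {-1,+1}^d`
together with a uniformly random `2`-element subset `{v,w} ⊆ X`. -/
def edgeSpace (d n : ℕ) : Finset (Finset (Fin d → ℝ) × Finset (Fin d → ℝ)) :=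
  (((pmCube d).powersetCard n) ×ˢ ((pmCube d).powersetCard 2)).filter (fun p => p.2 ⊆ p.1)

/-- The event that the chosen pair `{v,w}` is an edge of `conv X`. -/
def EdgeEvent {d : ℕ} (p : Finset (Fin d → ℝ) × Finset (Fin d → ℝ)) : Prop :=
  ∃ v w, p.2 = {v, w} ∧ IsEdge (convexHull ℝ (p.1 : Set (Fin d → ℝ))) v w

/-- The event that the chosen pair `{v,w}` satisfies `dist(v,w) = k`. -/
def DistEvent {d : ℕ} (k : ℕ) (p : Finset (Fin d → ℝ) × Finset (Fin d → ℝ)) : Prop :=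
  ∃ v w, v ≠ w ∧ p.2 = {v, w} ∧ hdist v w = k

/-- The event that the chosen pair `{v,w}` satisfies `dist(v,w) = k` and
`#(X ∩ C_*(v,w)) = m`. -/
def DistCapEvent {d : ℕ} (k m : ℕ) (p : Finset (Fin d → ℝ) × Finset (Fin d → ℝ)) : Prop :=
  ∃ v w, v ≠ w ∧ p.2 = {v, w} ∧ hdist v w = k ∧ (p.1 ∩ cubeFaceStar v w).card = m

/-- The edge probability `π(d,n)`. -/
noncomputable def piEdge (d n : ℕ) : ℝ :=
  (((edgeSpace d n).filter (fun p => EdgeEvent p)).card : ℝ) / ((edgeSpace d n).card : ℝ)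

/-- The conditional edge probability `π_k(d,n)` given `dist(v,w) = k`. -/
noncomputable def piEdgeK (d n k : ℕ) : ℝ :=
  (((edgeSpace d n).filter (fun p => EdgeEvent p ∧ DistEvent k p)).card : ℝ) /
    (((edgeSpace d n).filter (fun p => DistEvent k p)).card : ℝ)

/-- `φ : ℝ^{r+1} → ℝ^r`: the orthogonal projection onto the hyperplane
`H_𝟙 = {x : 𝟙ᵀx = 0}` (namely `x ↦ x - ((𝟙ᵀx)/(r+1))·𝟙`), followed by the
projection to the first `r` coordinates. -/
noncomputable def phi (r : ℕ) (x : Fin (r + 1) → ℝ) : Fin r → ℝ :=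
  fun i => x i.castSucc - (∑ j, x j) / (r + 1 : ℝ)

/-- The vector configuration `V_r = φ(C^{r+1}_*)`. -/
noncomputable def Vr (r : ℕ) : Finset (Fin r → ℝ) := (pmCubeStar (r + 1)).image (phi r)

/-- The half configuration `V_r^+ = φ({v ∈ C^{r+1}_* : v_{r+1} = +1})`. -/
noncomputable def VrPlus (r : ℕ) : Finset (Fin r → ℝ) :=
  (((pmCubeStar (r + 1)).filter (fun v => v (Fin.last r) = 1))).image (phi r)

/-- The number of sign vectors `ε ∈ {-1,+1}^S` with `0 ∉ conv{ε_s · s : s ∈ S}`. -/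
noncomputable def signCount {r : ℕ} (S : Finset (Fin r → ℝ)) : ℕ :=
  ((Finset.univ : Finset (↥S → Bool)).filter (fun ε =>
      (0 : Fin r → ℝ) ∉ convexHull ℝ
        (Set.range fun s : ↥S => (if ε s then (1 : ℝ) else -1) • (s : Fin r → ℝ)))).card

/-- `α(S)`: the probability that `0 ∉ conv{ε_s · s : s ∈ S}` for a uniformly random
sign vector `ε ∈ {-1,+1}^S`. -/
noncomputable def alphaSet {r : ℕ} (S : Finset (Fin r → ℝ)) : ℝ :=
  (signCount S : ℝ) / ((Finset.univ : Finset (↥S → Bool)).card : ℝ)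

/-- The complement `ℝ^r \ ⋃_{s ∈ S} H(s)` of the hyperplane arrangement `ℋ(S)`. -/
def arrComplement {r : ℕ} (S : Finset (Fin r → ℝ)) : Set (Fin r → ℝ) :=
  {x | ∀ s ∈ S, ∑ i, s i * x i ≠ 0}

/-- `χ(S)`: the number of chambers (connected components of the complement)
of the hyperplane arrangement `ℋ(S)`. -/
noncomputable def chi {r : ℕ} (S : Finset (Fin r → ℝ)) : ℕ :=
  Nat.card (ConnectedComponents ↥(arrComplement S))

/-- `b(p,q) = ∑_{i=0}^p C(q,i)`. -/
def bFn (p q : ℕ) : ℕ := ∑ i ∈ Finset.range (p + 1), q.choose i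

/-- `phi` as a linear map. -/
def phiLin (r : ℕ) : (Fin (r + 1) → ℝ) →ₗ[ℝ] (Fin r → ℝ) where
  toFun := phi r
  map_add' x y := by
    funext i
    simp only [phi, Pi.add_apply, Finset.sum_add_distrib]
    ring
  map_smul' c x := by
    funext i
    simp only [phi, Pi.smul_apply, smul_eq_mul, RingHom.id_apply, ← Finset.mul_sum]
    ring

/-- the standard pairing as a linear map -/
def pairLin {r : ℕ} (x : Fin r → ℝ) : (Fin r → ℝ) →ₗ[ℝ] ℝ where
  toFun s := ∑ i, s i * x i
  map_add' s t := by simp [add_mul, Finset.sum_add_distrib]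
  map_smul' c s := by simp [Finset.mul_sum, mul_assoc]

theorem pairLin_comm {r : ℕ} (x s : Fin r → ℝ) : pairLin x s = pairLin s x := by
  simp [pairLin, mul_comm]

theorem phi_neg (r : ℕ) (x : Fin (r + 1) → ℝ) : phi r (-x) = - phi r x :=
  (phiLin r).map_neg x

theorem mem_pmCube {d : ℕ} (v : Fin d → ℝ) : v ∈ pmCube d ↔ ∀ i, v i = 1 ∨ v i = -1 := by
  constructor
  · intro h
    simp only [pmCube, Finset.mem_image] at h
    obtain ⟨f, -, rfl⟩ := h
    intro i
    by_cases hf : f i <;> simp [hf]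
  · intro h
    simp only [pmCube, Finset.mem_image]
    refine ⟨fun i => decide (v i = 1), Finset.mem_univ _, ?_⟩
    funext i
    rcases h i with h | h <;> norm_num [h]

theorem mem_star {d : ℕ} (v : Fin d → ℝ) :
    v ∈ pmCubeStar d ↔ (∀ i, v i = 1 ∨ v i = -1) ∧ v ≠ -allOne d ∧ v ≠ allOne d := by
  simp [pmCubeStar, mem_pmCube]

theorem neg_mem_star {d : ℕ} {v : Fin d → ℝ} (h : v ∈ pmCubeStar d) : -v ∈ pmCubeStar d := by
  rw [mem_star] at *
  obtain ⟨h1, h2, h3⟩ := h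
  refine ⟨fun i => ?_, fun h => h3 (neg_injective h), fun h => h2 (by rw [← h, neg_neg])⟩
  rcases h1 i with h | h <;> simp [h]

theorem phi_eq_zero {r : ℕ} {p : Fin (r + 1) → ℝ} (h : phi r p = 0) :
    p = (p (Fin.last r)) • allOne (r + 1) := by
  have hr : (r + 1 : ℝ) ≠ 0 := by positivity
  have h1 : ∀ i : Fin r, p i.castSucc = (∑ j, p j) / (r + 1 : ℝ) := fun i => by
    have := congrFun h i
    simp only [phi, Pi.zero_apply] at this
    linarith
  have h2 : p (Fin.last r) = (∑ j, p j) / (r + 1 : ℝ) := by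
    have h3 : ∑ j, p j = r * ((∑ j, p j) / (r + 1 : ℝ)) + p (Fin.last r) := by
      conv_lhs => rw [Fin.sum_univ_castSucc]
      simp only [h1]
      simp
    field_simp at h3 ⊢
    linarith
  funext i
  refine Fin.lastCases ?_ (fun j => ?_) i
  · simp [allOne]
  · simp [allOne, h1 j, h2]

theorem phi_smul_allOne (r : ℕ) (c : ℝ) : phi r (c • allOne (r + 1)) = 0 := by
  have hr : (r + 1 : ℝ) ≠ 0 := by positivity
  funext i
  simp [phi, allOne]
  field_simp
  ring

theorem mem_segment_allOne {d : ℕ} (z : Fin d → ℝ) :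
    z ∈ segment ℝ (-(allOne d)) (allOne d) ↔ ∃ c : ℝ, -1 ≤ c ∧ c ≤ 1 ∧ z = c • allOne d := by
  constructor
  · rintro ⟨a, b, ha, hb, hab, rfl⟩
    refine ⟨b - a, by linarith, by linarith, ?_⟩
    rw [sub_smul, smul_neg]; abel
  · rintro ⟨c, h1, h2, rfl⟩
    refine ⟨(1 - c) / 2, (1 + c) / 2, by linarith, by linarith, by ring, ?_⟩
    funext i
    simp [allOne]
    ring

theorem good_iff {r : ℕ} (Y : Finset (Fin (r + 1) → ℝ)) (hY : Y ⊆ pmCubeStar (r + 1)) :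
    convexHull ℝ (Y : Set (Fin (r + 1) → ℝ)) ∩
      segment ℝ (-(allOne (r + 1))) (allOne (r + 1)) = ∅ ↔
    ∃ x : Fin r → ℝ, ∀ y ∈ Y, 0 < pairLin x (phi r y) := by
  constructor
  · intro h
    have h0 : (0 : Fin r → ℝ) ∉ convexHull ℝ (phiLin r '' (Y : Set (Fin (r + 1) → ℝ))) := by
      rw [← LinearMap.image_convexHull]
      rintro ⟨p, hp, hp0⟩
      have hc := phi_eq_zero (r := r) (p := p) hp0
      have hb : p ∈ Set.Icc (-(allOne (r + 1))) (allOne (r + 1)) := by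
        refine convexHull_min ?_ (convex_Icc _ _) hp
        intro y hy
        have := ((mem_star y).1 (hY hy)).1
        constructor <;> intro i <;> rcases this i with h | h <;> simp [allOne, h]
      have : p ∈ convexHull ℝ (Y : Set (Fin (r + 1) → ℝ)) ∩
          segment ℝ (-(allOne (r + 1))) (allOne (r + 1)) :=
        ⟨hp, (mem_segment_allOne p).2 ⟨_, hb.1 (Fin.last r), hb.2 (Fin.last r), hc⟩⟩
      rw [h] at this
      exact this
    have hcl : IsClosed (convexHull ℝ (phiLin r '' (Y : Set (Fin (r + 1) → ℝ)))) :=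
      ((Y.finite_toSet.image _).isCompact_convexHull (𝕜 := ℝ)).isClosed
    obtain ⟨f, u, hu, hf⟩ := geometric_hahn_banach_point_closed (convex_convexHull ℝ _) hcl h0
    refine ⟨fun i => f (Pi.single i 1), fun y hy => ?_⟩
    have h1 := hf _ (subset_convexHull ℝ _ ⟨y, hy, rfl⟩)
    have h2 := LinearMap.pi_apply_eq_sum_univ (f : (Fin r → ℝ) →ₗ[ℝ] ℝ) (phi r y)
    have h3 : f (phi r y) = pairLin (fun i => f (Pi.single i 1)) (phi r y) := by
      refine h2.trans ?_
      simp only [pairLin, LinearMap.coe_mk, AddHom.coe_mk, smul_eq_mul]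
      refine Finset.sum_congr rfl fun i _ => ?_
      have e : (fun j => if i = j then (1 : ℝ) else 0) = Pi.single i 1 := by
        funext j
        simp [Pi.single_apply, eq_comm]
      rw [e]
      rfl
    rw [← h3]
    rw [map_zero] at hu
    exact hu.trans h1
  · rintro ⟨x, hx⟩
    rw [Set.eq_empty_iff_forall_notMem]
    rintro z ⟨hz, hs⟩
    obtain ⟨c, -, -, rfl⟩ := (mem_segment_allOne z).1 hs
    have : c • allOne (r + 1) ∈ {z | 0 < (pairLin x ∘ₗ phiLin r) z} :=
      convexHull_min (t := {z | 0 < (pairLin x ∘ₗ phiLin r) z}) (fun y hy => hx y hy)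
        (convex_halfSpace_gt (LinearMap.isLinear _) _) hz
    have h2 : 0 < pairLin x (phi r (c • allOne (r + 1))) := this
    rw [phi_smul_allOne, map_zero] at h2
    exact lt_irrefl _ h2

theorem chi_image {k r : ℕ} (W : Finset (Fin k → ℝ)) (f : (Fin k → ℝ) → Fin r → ℝ) :
    chi (W.image f) = (W.powerset.filter (fun T => ∃ x : Fin r → ℝ,
      (∀ s ∈ T, 0 < pairLin x (f s)) ∧ ∀ s ∈ W \ T, pairLin x (f s) < 0)).card := by
  have hne : ∀ x : arrComplement (W.image f), ∀ s ∈ W, pairLin x.1 (f s) ≠ 0 := fun x s hs =>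
    x.2 _ (Finset.mem_image_of_mem f hs)
  have hcont : ∀ s, Continuous fun x : arrComplement (W.image f) => pairLin x.1 (f s) := by
    intro s
    simp only [pairLin, LinearMap.coe_mk, AddHom.coe_mk]
    exact continuous_finsetSum _ fun i _ =>
      continuous_const.mul ((continuous_apply i).comp continuous_subtype_val)
  let g : arrComplement (W.image f) → Finset (Fin k → ℝ) := fun x => W.filter fun s => 0 < pairLin x.1 (f s)
  have hg : IsLocallyConstant g := by
    rw [IsLocallyConstant.iff_eventually_eq]
    intro x
    have : ∀ s ∈ W, ∀ᶠ y in nhds x, (0 < pairLin y.1 (f s) ↔ 0 < pairLin x.1 (f s)) := by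
      intro s hs
      rcases lt_or_gt_of_ne (hne x s hs) with h | h
      · filter_upwards [(hcont s).continuousAt.eventually_lt_const h] with y hy
        exact ⟨fun h' => absurd h' hy.le.not_gt, fun h' => absurd h' h.le.not_gt⟩
      · filter_upwards [(hcont s).continuousAt.eventually_const_lt h] with y hy
        exact ⟨fun _ => h, fun _ => hy⟩
    have := (Filter.eventually_all_finset W).2 this
    filter_upwards [this] with y hy
    exact Finset.filter_congr fun s hs => hy s hs
  have hgT : ∀ x, g x ∈ W.powerset.filter (fun T => ∃ x : Fin r → ℝ,
      (∀ s ∈ T, 0 < pairLin x (f s)) ∧ ∀ s ∈ W \ T, pairLin x (f s) < 0) := by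
    intro x
    rw [Finset.mem_filter, Finset.mem_powerset]
    refine ⟨Finset.filter_subset _ _, x.1, fun s hs => (Finset.mem_filter.1 hs).2, fun s hs => ?_⟩
    rw [Finset.mem_sdiff, Finset.mem_filter] at hs
    have := hne x s hs.1
    have h2 : ¬ 0 < pairLin x.1 (f s) := fun h => hs.2 ⟨hs.1, h⟩
    exact lt_of_le_of_ne (not_lt.1 h2) this
  have hginj : ∀ x y, g x = g y → connectedComponent x = connectedComponent y := by
    intro x y hxy
    have hsub : segment ℝ x.1 y.1 ⊆ arrComplement (W.image f) := by
      rintro z ⟨a, b, ha, hb, hab, rfl⟩ t ht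
      obtain ⟨s, hs, rfl⟩ := Finset.mem_image.1 ht
      change pairLin _ (f s) ≠ 0
      rw [pairLin_comm, map_add, map_smul, map_smul, pairLin_comm, pairLin_comm (f s),
        smul_eq_mul, smul_eq_mul]
      have hiff : 0 < pairLin x.1 (f s) ↔ 0 < pairLin y.1 (f s) := by
        have : s ∈ g x ↔ s ∈ g y := by rw [hxy]
        simpa [g, hs] using this
      have key : ∀ u v : ℝ, 0 < u → 0 < v → 0 < a * u + b * v := by
        intro u v hu hv
        rcases ha.eq_or_lt with rfl | ha'
        · have : b = 1 := by linarith
          subst this; linarith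
        · have := mul_pos ha' hu
          have := mul_nonneg hb hv.le
          linarith
      rcases lt_or_gt_of_ne (hne x s hs) with h | h
      · have hy : pairLin y.1 (f s) < 0 :=
          lt_of_le_of_ne (not_lt.1 fun h' => h.le.not_gt (hiff.2 h')) (hne y s hs)
        have := key _ _ (neg_pos.2 h) (neg_pos.2 hy)
        intro h0
        linarith
      · exact (key _ _ h (hiff.1 h)).ne'
    have hpre : IsPreconnected (Subtype.val ⁻¹' segment ℝ x.1 y.1 :
        Set (arrComplement (W.image f))) := by
      rw [← Topology.IsInducing.subtypeVal.isPreconnected_image, Subtype.image_preimage_coe,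
        Set.inter_eq_right.2 hsub]
      exact (convex_segment _ _).isPreconnected
    exact connectedComponent_eq (hpre.subset_connectedComponent
      (left_mem_segment ℝ x.1 y.1) (right_mem_segment ℝ x.1 y.1))
  let G : ConnectedComponents (arrComplement (W.image f)) →
      (W.powerset.filter (fun T => ∃ x : Fin r → ℝ,
      (∀ s ∈ T, 0 < pairLin x (f s)) ∧ ∀ s ∈ W \ T, pairLin x (f s) < 0)) :=
    Quotient.lift (fun x => ⟨g x, hgT x⟩) (fun x y hxy => Subtype.ext
      (hg.apply_eq_of_isPreconnected isPreconnected_connectedComponent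
        (x := x) (y := y) mem_connectedComponent
        (by rw [show connectedComponent x = connectedComponent y from hxy]
            exact mem_connectedComponent)))
  have hG : Function.Bijective G := by
    constructor
    · intro a b
      refine Quotient.inductionOn₂ a b fun x y hxy => ?_
      exact Quotient.sound (hginj x y (congrArg Subtype.val hxy))
    · rintro ⟨T, hT⟩
      obtain ⟨hTW, x, h1, h2⟩ := Finset.mem_filter.1 hT
      rw [Finset.mem_powerset] at hTW
      have hx : x ∈ arrComplement (W.image f) := by
        intro t ht
        obtain ⟨s, hs, rfl⟩ := Finset.mem_image.1 ht
        by_cases hsT : s ∈ T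
        · exact (h1 s hsT).ne'
        · exact (h2 s (Finset.mem_sdiff.2 ⟨hs, hsT⟩)).ne
      refine ⟨Quotient.mk _ ⟨x, hx⟩, Subtype.ext ?_⟩
      change W.filter (fun s => 0 < pairLin x (f s)) = T
      ext s
      rw [Finset.mem_filter]
      constructor
      · rintro ⟨hs, hp⟩
        by_contra hsT
        exact (h2 s (Finset.mem_sdiff.2 ⟨hs, hsT⟩)).not_gt hp
      · exact fun hs => ⟨hTW hs, h1 s hs⟩
  rw [chi, Nat.card_congr (Equiv.ofBijective G hG), Nat.card_eq_fintype_card, Fintype.card_coe]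

/-- the half cube -/
def halfCube (r : ℕ) : Finset (Fin (r + 1) → ℝ) :=
  (pmCubeStar (r + 1)).filter (fun v => v (Fin.last r) = 1)

theorem neg_notMem_half {r : ℕ} {v : Fin (r + 1) → ℝ} (h : v ∈ halfCube r) :
    -v ∉ halfCube r := by
  intro h'
  have h1 := (Finset.mem_filter.1 h).2
  have h2 := (Finset.mem_filter.1 h').2
  rw [Pi.neg_apply, h1] at h2
  norm_num at h2

theorem half_or {r : ℕ} {v : Fin (r + 1) → ℝ} (h : v ∈ pmCubeStar (r + 1)) :
    v ∈ halfCube r ∨ -v ∈ halfCube r := by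
  rcases ((mem_star v).1 h).1 (Fin.last r) with h1 | h1
  · exact Or.inl (Finset.mem_filter.2 ⟨h, h1⟩)
  · exact Or.inr (Finset.mem_filter.2 ⟨neg_mem_star h, by simp [h1]⟩)

/-- flipSet the signs of the elements of `W` outside of `T` -/
def flipSet {k : ℕ} (W T : Finset (Fin k → ℝ)) : Finset (Fin k → ℝ) :=
  T ∪ (W \ T).image (fun y => -y)

theorem mem_flip {k : ℕ} (W T : Finset (Fin k → ℝ)) (y : Fin k → ℝ) :
    y ∈ flipSet W T ↔ y ∈ T ∨ (-y ∈ W ∧ -y ∉ T) := by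
  simp only [flipSet, Finset.mem_union, Finset.mem_image, Finset.mem_sdiff]
  refine or_congr Iff.rfl ⟨?_, fun h => ⟨-y, h, neg_neg y⟩⟩
  rintro ⟨z, hz, rfl⟩
  rwa [neg_neg]

theorem card_flip {r : ℕ} {W T : Finset (Fin (r + 1) → ℝ)} (hW : W ⊆ halfCube r) (hT : T ⊆ W) :
    (flipSet W T).card = W.card := by
  rw [flipSet, Finset.card_union_of_disjoint, Finset.card_image_of_injective _ neg_injective,
    add_comm, Finset.card_sdiff_add_card_eq_card hT]
  rw [Finset.disjoint_left]
  intro y hy hy'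
  obtain ⟨z, hz, rfl⟩ := Finset.mem_image.1 hy'
  exact neg_notMem_half (hW (Finset.mem_sdiff.1 hz).1) (hW (hT hy))

theorem count_lemma (r m : ℕ) (Q : Finset (Fin (r + 1) → ℝ) → Prop) :
    (((pmCubeStar (r + 1)).powersetCard m).filter (fun Y => Q Y ∧ NoAntipodal Y)).card =
      ∑ W ∈ (halfCube r).powersetCard m, (W.powerset.filter (fun T => Q (flipSet W T))).card := by
  rw [← Finset.card_sigma]
  symm
  have hback : ∀ Y : Finset (Fin (r + 1) → ℝ), Y ⊆ pmCubeStar (r + 1) → NoAntipodal Y →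
      flipSet ((halfCube r).filter (fun y => y ∈ Y ∨ -y ∈ Y)) ((halfCube r).filter (fun y => y ∈ Y))
        = Y := by
    intro Y hY hA
    ext y
    simp only [mem_flip, Finset.mem_filter, neg_neg]
    constructor
    · rintro (h | ⟨⟨h1, h2⟩, h3⟩)
      · exact h.2
      · tauto
    · intro hy
      have := hA y hy
      have := half_or (hY hy)
      tauto
  refine Finset.card_nbij' (fun p => flipSet p.1 p.2)
    (fun Y => ⟨(halfCube r).filter (fun y => y ∈ Y ∨ -y ∈ Y),
      (halfCube r).filter (fun y => y ∈ Y)⟩) ?_ ?_ ?_ ?_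
  · rintro ⟨W, T⟩ h
    simp only [Finset.coe_sigma, Set.mem_sigma_iff, Finset.mem_coe, Finset.mem_powersetCard,
      Finset.mem_filter, Finset.mem_powerset] at h ⊢
    obtain ⟨⟨hW, hm⟩, hT, hQ⟩ := h
    refine ⟨⟨?_, by rw [card_flip hW hT, hm]⟩, hQ, ?_⟩
    · intro y hy
      rcases (mem_flip _ _ _).1 hy with h | h
      · exact (Finset.mem_filter.1 (hW (hT h))).1
      · have := neg_mem_star (Finset.mem_filter.1 (hW h.1)).1
        rwa [neg_neg] at this
    · intro y hy hy'
      rw [mem_flip] at hy hy'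
      rw [neg_neg] at hy'
      have h1 := @neg_notMem_half r y
      have h2 := @hW y
      have h3 := @hW (-y)
      have h4 := @hT y
      have h5 := @hT (-y)
      grind
  · intro Y h
    simp only [Finset.coe_sigma, Set.mem_sigma_iff, Finset.mem_coe, Finset.mem_powersetCard,
      Finset.mem_filter, Finset.mem_powerset] at h ⊢
    obtain ⟨⟨hY, hm⟩, hQ, hA⟩ := h
    have hs : (halfCube r).filter (fun y => y ∈ Y) ⊆
        (halfCube r).filter (fun y => y ∈ Y ∨ -y ∈ Y) :=
      Finset.monotone_filter_right _ fun y _ h => Or.inl h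
    refine ⟨⟨Finset.filter_subset _ _, ?_⟩, hs, ?_⟩
    · rw [← card_flip (Finset.filter_subset _ _) hs, hback Y hY hA, hm]
    · rwa [hback Y hY hA]
  · rintro ⟨W, T⟩ h
    simp only [Finset.coe_sigma, Set.mem_sigma_iff, Finset.mem_coe, Finset.mem_powersetCard,
      Finset.mem_filter, Finset.mem_powerset] at h ⊢
    obtain ⟨⟨hW, hm⟩, hT, hQ⟩ := h
    have e1 : (halfCube r).filter (fun y => y ∈ flipSet W T ∨ -y ∈ flipSet W T) = W := by
      ext y
      simp only [Finset.mem_filter, mem_flip, neg_neg]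
      have h1 := @neg_notMem_half r y
      have h2 := @hW y
      have h3 := @hW (-y)
      have h4 := @hT y
      have h5 := @hT (-y)
      grind
    have e2 : (halfCube r).filter (fun y => y ∈ flipSet W T) = T := by
      ext y
      simp only [Finset.mem_filter, mem_flip]
      have h1 := @neg_notMem_half r y
      have h2 := @hW y
      have h3 := @hW (-y)
      have h4 := @hT y
      have h5 := @hT (-y)
      grind
    rw [e1, e2]
  · intro Y h
    simp only [Finset.mem_coe, Finset.mem_powersetCard, Finset.mem_filter] at h
    exact hback Y h.1.1 h.2.2

theorem phi_injOn_half (r : ℕ) : Set.InjOn (phi r) (halfCube r : Set (Fin (r + 1) → ℝ)) := by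
  intro x hx y hy hxy
  have h0 : phi r (x - y) = 0 := by
    have := (phiLin r).map_sub x y
    change phi r (x - y) = phi r x - phi r y at this
    rw [this, hxy, sub_self]
  have h1 := phi_eq_zero h0
  have hx1 := (Finset.mem_filter.1 hx).2
  have hy1 := (Finset.mem_filter.1 hy).2
  rw [Pi.sub_apply, hx1, hy1, sub_self, zero_smul] at h1
  exact sub_eq_zero.1 h1

theorem sum_VrPlus (r m : ℕ) (F : Finset (Fin r → ℝ) → ℝ) :
    ∑ Z ∈ (VrPlus r).powersetCard m, F Z =
      ∑ W ∈ (halfCube r).powersetCard m, F (W.image (phi r)) := by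
  symm
  refine Finset.sum_nbij (fun W => W.image (phi r)) ?_ ?_ ?_ (fun _ _ => rfl)
  · intro W hW
    rw [Finset.mem_powersetCard] at hW ⊢
    refine ⟨Finset.image_subset_image hW.1, ?_⟩
    rw [Finset.card_image_of_injOn ((phi_injOn_half r).mono (by exact_mod_cast hW.1)), hW.2]
  · intro W hW W' hW' h
    rw [Finset.mem_coe, Finset.mem_powersetCard] at hW hW'
    have h' : phi r '' (W : Set (Fin (r + 1) → ℝ)) = phi r '' (W' : Set (Fin (r + 1) → ℝ)) := by
      have := congrArg (fun s : Finset (Fin r → ℝ) => (s : Set (Fin r → ℝ))) h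
      simpa using this
    exact_mod_cast ((phi_injOn_half r).image_eq_image_iff (by exact_mod_cast hW.1)
      (by exact_mod_cast hW'.1)).1 h'
  · intro Z hZ
    rw [Finset.mem_coe, Finset.mem_powersetCard] at hZ
    obtain ⟨W, hW, rfl⟩ := Finset.subset_image_iff.1 hZ.1
    refine ⟨W, ?_, rfl⟩
    rw [Finset.mem_coe, Finset.mem_powersetCard]
    have hW' : W ⊆ halfCube r := by exact_mod_cast hW
    refine ⟨hW', ?_⟩
    rw [← hZ.2, Finset.card_image_of_injOn ((phi_injOn_half r).mono (by exact_mod_cast hW'))]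

theorem statement11 (r m : ℕ) :
    alpha (r + 1) m =
      (1 / 2 ^ m) *
        ((∑ Z ∈ (VrPlus r).powersetCard m, (chi Z : ℝ)) /
          (((VrPlus r).powersetCard m).card : ℝ)) := by
  have hnum := count_lemma r m (fun Y => convexHull ℝ (Y : Set (Fin (r + 1) → ℝ)) ∩
    segment ℝ (-(allOne (r + 1))) (allOne (r + 1)) = ∅)
  have hden := count_lemma r m (fun _ => True)
  have hcard : (((VrPlus r).powersetCard m).card : ℝ) = (((halfCube r).powersetCard m).card : ℝ) := by
    have := sum_VrPlus r m (fun _ => 1)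
    simpa using this
  have hden' : (((pmCubeStar (r + 1)).powersetCard m).filter (fun Y => NoAntipodal Y)).card =
      ((halfCube r).powersetCard m).card * 2 ^ m := by
    simp only [true_and, Finset.filter_true, Finset.card_powerset] at hden
    rw [hden, Finset.sum_congr rfl (g := fun _ => 2 ^ m), Finset.sum_const, smul_eq_mul]
    intro W hW
    rw [(Finset.mem_powersetCard.1 hW).2]
  have hchi : ∀ W ∈ (halfCube r).powersetCard m, (W.powerset.filter (fun T =>
      convexHull ℝ (flipSet W T : Set (Fin (r + 1) → ℝ)) ∩
        segment ℝ (-(allOne (r + 1))) (allOne (r + 1)) = ∅)).card = chi (W.image (phi r)) := by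
    intro W hW
    rw [chi_image]
    congr 1
    refine Finset.filter_congr fun T hT => ?_
    rw [Finset.mem_powersetCard] at hW
    rw [Finset.mem_powerset] at hT
    rw [good_iff]
    · refine exists_congr fun x => ?_
      constructor
      · intro h
        refine ⟨fun s hs => h s ((mem_flip _ _ _).2 (Or.inl hs)), fun s hs => ?_⟩
        have := h (-s) ((mem_flip _ _ _).2 (Or.inr (by simpa using hs)))
        rw [phi_neg, map_neg] at this
        linarith
      · rintro ⟨h1, h2⟩ y hy
        rcases (mem_flip _ _ _).1 hy with h | h
        · exact h1 y h
        · have := h2 (-y) (Finset.mem_sdiff.2 h)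
          rw [phi_neg, map_neg] at this
          linarith
    · intro y hy
      rcases (mem_flip _ _ _).1 hy with h | h
      · exact (Finset.mem_filter.1 (hW.1 (hT h))).1
      · have := neg_mem_star (Finset.mem_filter.1 (hW.1 h.1)).1
        rwa [neg_neg] at this
  have hnum' := hnum.trans (Finset.sum_congr rfl fun W hW =>
    Eq.trans (by congr!) (hchi W hW))
  have hal : alpha (r + 1) m =
      ((∑ W ∈ (halfCube r).powersetCard m, chi (W.image (phi r)) : ℕ) : ℝ) /
        ((((pmCubeStar (r + 1)).powersetCard m).filter (fun Y => NoAntipodal Y)).card : ℝ) := by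
    rw [← hnum', alpha]
    congr!
  rw [hal, hden', sum_VrPlus r m (fun Z => (chi Z : ℝ)), hcard]
  push_cast
  rw [one_div, ← div_eq_inv_mul, div_div]

end
end

section
/- For all k and all m with 0 ≤ m ≤ 2^k − 2, the inequality τ(k,m) ≤ b(k−2, m−1) / 2^{m−1} holds, where b(p,q) := Σ_{i=0}^{p} C(q,i). -/
open Finset Filter MeasureTheory

open scoped Classical

noncomputable section

/-- The set of strict sign patterns of the functionals `l t`, `t ∈ T`, on `W`. -/
def signPat {ι V : Type*} [AddCommGroup V] [Module ℝ V] (l : ι → V →ₗ[ℝ] ℝ)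
    (T : Finset ι) (W : Submodule ℝ V) : Finset (Finset ι) :=
  T.powerset.filter (fun S => ∃ w ∈ W, ∀ t ∈ T, (t ∈ S → 0 < l t w) ∧ (t ∉ S → l t w < 0))

/-- Recursive bound for the number of sign patterns. -/
def patBound : ℕ → ℕ → ℕ
  | 0, _ => 1
  | _ + 1, 0 => 0
  | m + 1, r + 1 => patBound m (r + 1) + patBound m r

theorem patBound_eq (m r : ℕ) :
    patBound (m + 1) r = 2 * ∑ i ∈ Finset.range r, m.choose i := by
  induction m generalizing r with
  | zero =>
    cases r with
    | zero => simp [patBound]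
    | succ r => simp [patBound, Finset.sum_range_succ']
  | succ m ih =>
    cases r with
    | zero => simp [patBound]
    | succ r =>
      rw [patBound, ih, ih, Finset.sum_range_succ', Finset.sum_range_succ' (fun i => (m+1).choose i)]
      simp only [Nat.choose_succ_succ, Finset.sum_add_distrib, Nat.choose_zero_right]
      ring

theorem card_signPat_le {ι V : Type*} [AddCommGroup V] [Module ℝ V] [FiniteDimensional ℝ V]
    (l : ι → V →ₗ[ℝ] ℝ) (T : Finset ι) :
    ∀ (W : Submodule ℝ V) (r : ℕ), Module.finrank ℝ W ≤ r →
      (signPat l T W).card ≤ patBound T.card r := by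
  induction T using Finset.induction_on with
  | empty =>
    intro W r _
    simp only [Finset.card_empty, patBound]
    refine (Finset.card_filter_le _ _).trans ?_
    simp
  | insert a T ha ih =>
    intro W r hr
    rw [Finset.card_insert_of_notMem ha]
    by_cases h0 : ∀ w ∈ W, l a w = 0
    · have : signPat l (insert a T) W = ∅ := by
        unfold signPat
        rw [Finset.filter_eq_empty_iff]
        rintro S - ⟨w, hw, h⟩
        have h1 := h a (Finset.mem_insert_self _ _)
        rw [h0 w hw] at h1
        by_cases haS : a ∈ S
        · exact lt_irrefl _ (h1.1 haS)
        · exact lt_irrefl _ (h1.2 haS)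
      rw [this]; simp
    · have hlt : W ⊓ LinearMap.ker (l a) < W := by
        refine lt_of_le_of_ne inf_le_left ?_
        intro heq
        apply h0
        intro w hw
        rw [← heq] at hw
        exact hw.2
      have hfr := Submodule.finrank_lt_finrank_of_lt hlt
      obtain ⟨r, rfl⟩ : ∃ r', r = r' + 1 := ⟨r - 1, by omega⟩
      rw [patBound]
      rw [← Finset.card_memberSubfamily_add_card_nonMemberSubfamily a,
        ← Finset.card_union_add_card_inter]
      refine add_le_add (le_trans (Finset.card_le_card ?_) (ih W (r + 1) hr))
        (le_trans (Finset.card_le_card ?_) (ih (W ⊓ LinearMap.ker (l a)) r (by omega)))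
      · intro S hS
        rw [Finset.mem_union, Finset.mem_memberSubfamily, Finset.mem_nonMemberSubfamily] at hS
        simp only [signPat, Finset.mem_filter, Finset.mem_powerset] at hS ⊢
        rcases hS with ⟨⟨hs, w, hw, h⟩, haS⟩ | ⟨⟨hs, w, hw, h⟩, haS⟩
        · refine ⟨fun x hx => ?_, w, hw, fun t ht => ?_⟩
          · have := hs (Finset.mem_insert_of_mem hx)
            rcases Finset.mem_insert.1 this with rfl | h'
            · exact absurd hx haS
            · exact h'
          · have h1 := h t (Finset.mem_insert_of_mem ht)
            have hne : t ≠ a := fun e => ha (e ▸ ht)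
            simpa [hne] using h1
        · refine ⟨fun x hx => ?_, w, hw, fun t ht => h t (Finset.mem_insert_of_mem ht)⟩
          rcases Finset.mem_insert.1 (hs hx) with rfl | h'
          · exact absurd hx haS
          · exact h'
      · intro S hS
        rw [Finset.mem_inter, Finset.mem_memberSubfamily, Finset.mem_nonMemberSubfamily] at hS
        simp only [signPat, Finset.mem_filter, Finset.mem_powerset] at hS ⊢
        obtain ⟨⟨⟨_, w, hw, h⟩, haS⟩, ⟨hs, w', hw', h'⟩, _⟩ := hS
        have p1 := (h a (Finset.mem_insert_self _ _)).1 (Finset.mem_insert_self _ _)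
        have p2 := (h' a (Finset.mem_insert_self _ _)).2 haS
        refine ⟨fun x hx => ?_, (-(l a w')) • w + (l a w) • w',
          ⟨W.add_mem (W.smul_mem _ hw) (W.smul_mem _ hw'), ?_⟩, fun t ht => ?_⟩
        · rcases Finset.mem_insert.1 (hs hx) with rfl | h'
          · exact absurd hx haS
          · exact h'
        · simp only [SetLike.mem_coe, LinearMap.mem_ker, map_add, map_smul, smul_eq_mul]
          ring
        · have h1 := h t (Finset.mem_insert_of_mem ht)
          have h2 := h' t (Finset.mem_insert_of_mem ht)
          have hne : t ≠ a := fun e => ha (e ▸ ht)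
          simp only [Finset.mem_insert, hne, false_or] at h1
          simp only [map_add, map_smul, smul_eq_mul]
          constructor
          · intro hS
            have := mul_pos (neg_pos.2 p2) (h1.1 hS)
            have := mul_pos p1 (h2.1 hS)
            linarith
          · intro hS
            have := mul_neg_of_pos_of_neg (neg_pos.2 p2) (h1.2 hS)
            have := mul_neg_of_pos_of_neg p1 (h2.2 hS)
            linarith

theorem two_pow_mul_choose_le (N m : ℕ) : 2 ^ m * N.choose m ≤ (2 * N).choose m := by
  have h : 2 ^ m * N.descFactorial m ≤ (2 * N).descFactorial m := by
    induction m with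
    | zero => simp
    | succ m ih =>
      rw [Nat.descFactorial_succ, Nat.descFactorial_succ]
      calc 2 ^ (m + 1) * ((N - m) * N.descFactorial m)
          = (2 * (N - m)) * (2 ^ m * N.descFactorial m) := by ring
        _ ≤ (2 * N - m) * (2 * N).descFactorial m := Nat.mul_le_mul (by omega) ih
  rw [Nat.descFactorial_eq_factorial_mul_choose, Nat.descFactorial_eq_factorial_mul_choose] at h
  refine Nat.le_of_mul_le_mul_left ?_ (Nat.factorial_pos m)
  linarith

theorem mem_pmCube_iff {k : ℕ} (y : Fin k → ℝ) : y ∈ pmCube k ↔ ∀ i, y i = 1 ∨ y i = -1 := by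
  unfold pmCube
  rw [Finset.mem_image]
  constructor
  · rintro ⟨f, -, rfl⟩ i
    by_cases h : f i <;> simp [h]
  · intro h
    refine ⟨fun i => decide (y i = 1), Finset.mem_univ _, ?_⟩
    funext i
    rcases h i with h | h
    · simp [h]
    · simp only [h]; norm_num

theorem neg_mem_pmCubeStar {k : ℕ} {y : Fin k → ℝ} (hy : y ∈ pmCubeStar k) :
    -y ∈ pmCubeStar k := by
  unfold pmCubeStar at *
  simp only [Finset.mem_sdiff, mem_pmCube_iff, Finset.mem_insert, Finset.mem_singleton,
    not_or] at hy ⊢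
  refine ⟨fun i => ?_, fun h => hy.2.2 (neg_injective h), fun h => hy.2.1 ?_⟩
  · rcases hy.1 i with h | h <;> simp [h]
  · rw [← h, neg_neg]

/-- Existence of a separating functional vanishing on `𝟙`. -/
theorem exists_functional {k : ℕ} (i0 : Fin k) (Y : Finset (Fin k → ℝ)) (hY : Y ⊆ pmCubeStar k)
    (h : convexHull ℝ (Y : Set (Fin k → ℝ)) ∩ segment ℝ (-(allOne k)) (allOne k) = ∅) :
    ∃ f : Module.Dual ℝ (Fin k → ℝ), f (allOne k) = 0 ∧ ∀ y ∈ Y, 0 < f y := by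
  have hbox : ∀ x ∈ convexHull ℝ (Y : Set (Fin k → ℝ)), x i0 ∈ Set.Icc (-1 : ℝ) 1 := by
    intro x hx
    have hc : Convex ℝ {x : Fin k → ℝ | x i0 ∈ Set.Icc (-1 : ℝ) 1} :=
      (convex_Icc (-1 : ℝ) 1).linear_preimage (LinearMap.proj i0 : (Fin k → ℝ) →ₗ[ℝ] ℝ)
    refine convexHull_min ?_ hc hx
    intro y hy
    have := hY hy
    simp only [pmCubeStar, Finset.mem_sdiff, mem_pmCube_iff] at this
    rcases this.1 i0 with h | h <;> simp [h]
  set L : Submodule ℝ (Fin k → ℝ) := Submodule.span ℝ {allOne k} with hL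
  have hdisj : Disjoint (convexHull ℝ (Y : Set (Fin k → ℝ))) (L : Set (Fin k → ℝ)) := by
    rw [Set.disjoint_left]
    intro x hx hxL
    obtain ⟨c, rfl⟩ := Submodule.mem_span_singleton.1 hxL
    have hb := hbox _ hx
    simp only [Pi.smul_apply, allOne, smul_eq_mul, mul_one, Set.mem_Icc] at hb
    have : c • allOne k ∈ convexHull ℝ (Y : Set (Fin k → ℝ)) ∩
        segment ℝ (-(allOne k)) (allOne k) := by
      refine ⟨hx, (1 - c) / 2, (1 + c) / 2, by linarith [hb.2], by linarith [hb.1], by ring, ?_⟩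
      ext i
      simp [allOne]
      ring
    rw [h] at this
    exact this
  obtain ⟨f, u, v, h1, huv, h2⟩ := geometric_hahn_banach_compact_closed
    (convex_convexHull ℝ (Y : Set (Fin k → ℝ))) (Set.Finite.isCompact_convexHull ℝ Y.finite_toSet)
    (Submodule.convex L) (Submodule.closed_of_finiteDimensional L) hdisj
  have hv : v < 0 := by simpa using h2 0 L.zero_mem
  have hone : f (allOne k) = 0 := by
    by_contra hne
    have := h2 ((v / f (allOne k)) • allOne k)
      (L.smul_mem _ (Submodule.mem_span_singleton_self _))
    rw [map_smul, smul_eq_mul, div_mul_cancel₀ _ hne] at this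
    exact lt_irrefl _ this
  refine ⟨-(f : (Fin k → ℝ) →ₗ[ℝ] ℝ), by simp [hone], fun y hy => ?_⟩
  have := h1 y (subset_convexHull ℝ _ hy)
  simp
  linarith

/-- Representative of an antipodal pair. -/
def rep {k : ℕ} (i0 : Fin k) (y : Fin k → ℝ) : Fin k → ℝ := if y i0 = 1 then y else -y

theorem rep_eq {k : ℕ} (i0 : Fin k) (y : Fin k → ℝ) : rep i0 y = y ∨ rep i0 y = -y := by
  unfold rep; split_ifs <;> simp

theorem card_star {k : ℕ} (i0 : Fin k) :
    (pmCubeStar k).card = 2 * ((pmCubeStar k).filter (fun y => y i0 = 1)).card := by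
  rw [← Finset.card_filter_add_card_filter_not (fun y : Fin k → ℝ => y i0 = 1), two_mul]
  congr 1
  refine Finset.card_bij' (fun y _ => -y) (fun y _ => -y) ?_ ?_ ?_ ?_
  · intro y hy
    rw [Finset.mem_filter] at hy ⊢
    refine ⟨neg_mem_pmCubeStar hy.1, ?_⟩
    have := hy.1
    simp only [pmCubeStar, Finset.mem_sdiff, mem_pmCube_iff] at this
    rcases this.1 i0 with h | h
    · exact absurd h hy.2
    · simp [h]
  · intro y hy
    rw [Finset.mem_filter] at hy ⊢
    refine ⟨neg_mem_pmCubeStar hy.1, ?_⟩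
    simp only [Pi.neg_apply, hy.2]
    norm_num
  · simp
  · simp

theorem card_good_le {k : ℕ} (i0 : Fin k) (m : ℕ) :
    (((pmCubeStar k).powersetCard m).filter (fun Y : Finset (Fin k → ℝ) =>
      convexHull ℝ (Y : Set (Fin k → ℝ)) ∩ segment ℝ (-(allOne k)) (allOne k) = ∅)).card ≤
    patBound m (k - 1) * (((pmCubeStar k).filter (fun y => y i0 = 1)).card.choose m) := by
  rw [← Finset.card_powersetCard]
  have key : ∀ Y ∈ ((pmCubeStar k).powersetCard m).filter (fun Y : Finset (Fin k → ℝ) =>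
      convexHull ℝ (Y : Set (Fin k → ℝ)) ∩ segment ℝ (-(allOne k)) (allOne k) = ∅),
      Y ⊆ pmCubeStar k ∧ Y.card = m ∧
      ∃ f : Module.Dual ℝ (Fin k → ℝ), f (allOne k) = 0 ∧ ∀ y ∈ Y, 0 < f y := by
    intro Y hY
    rw [Finset.mem_filter, Finset.mem_powersetCard] at hY
    exact ⟨hY.1.1, hY.1.2, exists_functional i0 Y hY.1.1 hY.2⟩
  have anti : ∀ (Y : Finset (Fin k → ℝ)), (∃ f : Module.Dual ℝ (Fin k → ℝ),
      f (allOne k) = 0 ∧ ∀ y ∈ Y, 0 < f y) → ∀ y ∈ Y, -y ∉ Y := by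
    rintro Y ⟨f, -, hf⟩ y hy hny
    have h1 := hf _ hy
    have h2 := hf _ hny
    rw [map_neg] at h2
    linarith
  refine Finset.card_le_mul_card_image_of_maps_to (f := fun Y => Y.image (rep i0)) ?_ _ ?_
  · intro Y hY
    obtain ⟨hsub, hcard, hf⟩ := key Y hY
    rw [Finset.mem_powersetCard]
    constructor
    · intro t ht
      obtain ⟨y, hy, rfl⟩ := Finset.mem_image.1 ht
      have hys := hsub hy
      rw [Finset.mem_filter]
      unfold rep
      split_ifs with h
      · exact ⟨hys, h⟩
      · refine ⟨neg_mem_pmCubeStar hys, ?_⟩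
        simp only [pmCubeStar, Finset.mem_sdiff, mem_pmCube_iff] at hys
        rcases hys.1 i0 with h' | h'
        · exact absurd h' h
        · simp [h']
    · rw [← hcard]
      apply Finset.card_image_of_injOn
      intro y hy z hz hyz
      have hyz : rep i0 y = rep i0 z := hyz
      rcases rep_eq i0 y with h1 | h1 <;> rcases rep_eq i0 z with h2 | h2 <;> rw [h1, h2] at hyz
      · exact hyz
      · exact absurd (hyz ▸ hy) (anti Y hf z hz)
      · exact absurd (hyz ▸ hz) (anti Y hf y hy)
      · exact neg_injective hyz
  · intro T hT
    have hTc := (Finset.mem_powersetCard.1 hT).2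
    have hfin : Module.finrank ℝ
        (LinearMap.ker (Module.Dual.eval ℝ (Fin k → ℝ) (allOne k))) ≤ k - 1 := by
      have hlt : LinearMap.ker (Module.Dual.eval ℝ (Fin k → ℝ) (allOne k)) < ⊤ := by
        rw [lt_top_iff_ne_top]
        intro htop
        have : (LinearMap.proj i0 : Module.Dual ℝ (Fin k → ℝ)) ∈
            LinearMap.ker (Module.Dual.eval ℝ (Fin k → ℝ) (allOne k)) := by
          rw [htop]; trivial
        simp [LinearMap.mem_ker, allOne] at this
      have := Submodule.finrank_lt_finrank_of_lt hlt
      rw [finrank_top, Subspace.dual_finrank_eq, Module.finrank_fin_fun] at this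
      omega
    have hbd := card_signPat_le (fun t : Fin k → ℝ => Module.Dual.eval ℝ (Fin k → ℝ) t) T _ _ hfin
    rw [hTc] at hbd
    refine le_trans ?_ hbd
    refine Finset.card_le_card_of_injOn (fun Y => T ∩ Y) ?_ ?_
    · intro Y hY
      rw [Finset.mem_coe, Finset.mem_filter] at hY
      obtain ⟨hY, hYT⟩ := hY
      obtain ⟨hsub, hcard, f, hf1, hf⟩ := key Y hY
      simp only [signPat, Finset.coe_filter, Finset.mem_powerset, Set.mem_ofPred_eq]
      refine ⟨Finset.inter_subset_left, f, ?_, fun t ht => ⟨fun h => ?_, fun h => ?_⟩⟩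
      · simpa [LinearMap.mem_ker] using hf1
      · exact hf t (Finset.mem_inter.1 h).2
      · have hnY : t ∉ Y := fun h' => h (Finset.mem_inter.2 ⟨ht, h'⟩)
        rw [← hYT] at ht
        obtain ⟨y, hy, rfl⟩ := Finset.mem_image.1 ht
        rcases rep_eq i0 y with h1 | h1
        · rw [h1] at hnY; exact absurd hy hnY
        · rw [h1]
          have := hf y hy
          simp
          linarith
    · have main : ∀ Y Z : Finset (Fin k → ℝ), (∀ y ∈ Y, -y ∉ Y) → Y.image (rep i0) = T →
          Z.image (rep i0) = T → T ∩ Y = T ∩ Z → Y ⊆ Z := by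
        intro Y Z hYa hY hZ hYZ y hy
        have ht : rep i0 y ∈ T := hY ▸ Finset.mem_image_of_mem _ hy
        have hiff : rep i0 y ∈ Y ↔ rep i0 y ∈ Z := by
          have := Finset.ext_iff.1 hYZ (rep i0 y)
          simpa [ht] using this
        rcases rep_eq i0 y with h1 | h1
        · rw [h1] at hiff; exact hiff.1 hy
        · have hn : rep i0 y ∉ Z := by
            rw [← hiff, h1]; exact hYa y hy
          have ht' := ht
          rw [← hZ] at ht'
          obtain ⟨z, hz, hzy⟩ := Finset.mem_image.1 ht'
          rcases rep_eq i0 z with h2 | h2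
          · rw [← hzy, h2] at hn; exact absurd hz hn
          · have : z = y := by
              rw [h1, h2] at hzy; exact neg_injective hzy
            exact this ▸ hz
      intro Y hY Z hZ hYZ
      rw [Finset.mem_coe, Finset.mem_filter] at hY hZ
      exact Finset.Subset.antisymm
        (main Y Z (anti Y (key Y hY.1).2.2) hY.2 hZ.2 hYZ)
        (main Z Y (anti Z (key Z hZ.1).2.2) hZ.2 hY.2 hYZ.symm)

/-- In the definition of `tau`, the bound variable of the filter is a `Set`; this lemma restates
the count with finsets. -/
theorem tau_eq (k m : ℕ) : tau k m =
    ((((pmCubeStar k).powersetCard m).filter (fun Y : Finset (Fin k → ℝ) =>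
      convexHull ℝ (Y : Set (Fin k → ℝ)) ∩ segment ℝ (-(allOne k)) (allOne k) = ∅)).card : ℝ) /
    ((((pmCubeStar k).powersetCard m)).card : ℝ) := by
  unfold tau
  congr 2
  symm
  refine Finset.card_bij (fun Y _ => (Y : Set (Fin k → ℝ))) ?_ ?_ ?_
  · intro Y hY
    rw [Finset.mem_filter] at hY ⊢
    refine ⟨?_, hY.2⟩
    simp only [Finset.bind_def, Finset.pure_def, Finset.mem_sup, Finset.mem_singleton]
    exact ⟨Y, hY.1, rfl⟩
  · intro Y _ Z _ h
    exact Finset.coe_injective h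
  · intro Y hY
    rw [Finset.mem_filter] at hY
    obtain ⟨h1, h2⟩ := hY
    simp only [Finset.bind_def, Finset.pure_def, Finset.mem_sup, Finset.mem_singleton] at h1
    obtain ⟨Z, hZ, rfl⟩ := h1
    exact ⟨Z, Finset.mem_filter.2 ⟨hZ, h2⟩, rfl⟩

-- STATEMENT 13
theorem statement13 (k m : ℕ) (hm : m ≤ 2 ^ k - 2) :
    tau k m ≤ (bFn (k - 2) (m - 1) : ℝ) / 2 ^ (m - 1) := by
  rcases Nat.eq_zero_or_pos m with rfl | hm0
  · have h1 : tau k 0 ≤ 1 := by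
      rw [tau_eq]
      refine div_le_one_of_le₀ ?_ (Nat.cast_nonneg _)
      exact_mod_cast Finset.card_filter_le _ _
    have h2 : bFn (k - 2) (0 - 1) = 1 := by
      simp [bFn, Finset.sum_range_succ']
    rw [h2]
    simpa using h1
  · have hk : 2 ≤ k := by
      by_contra hk
      have : k = 0 ∨ k = 1 := by omega
      rcases this with rfl | rfl <;> simp at hm <;> omega
    obtain ⟨m, rfl⟩ : ∃ m', m = m' + 1 := ⟨m - 1, by omega⟩
    have hg := card_good_le (⟨0, by omega⟩ : Fin k) (m + 1)
    have hc := card_star (⟨0, by omega⟩ : Fin k)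
    set N := ((pmCubeStar k).filter (fun y => y (⟨0, by omega⟩ : Fin k) = 1)).card
    have hch := two_pow_mul_choose_le N (m + 1)
    rw [patBound_eq] at hg
    have hb : ∑ i ∈ Finset.range (k - 1), m.choose i = bFn (k - 2) m := by
      unfold bFn
      congr 2
      omega
    rw [hb] at hg
    rw [tau_eq]
    rw [Finset.card_powersetCard, hc]
    simp only [Nat.add_sub_cancel]
    refine div_le_of_le_mul₀ (Nat.cast_nonneg _) (by positivity) ?_
    rw [div_mul_eq_mul_div, le_div_iff₀ (by positivity)]
    norm_cast
    calc _ ≤ 2 * bFn (k - 2) m * N.choose (m + 1) * 2 ^ m := Nat.mul_le_mul_right _ hg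
      _ = bFn (k - 2) m * (2 ^ (m + 1) * N.choose (m + 1)) := by ring
      _ ≤ _ := Nat.mul_le_mul_left _ hch
end
end

section
/- Let m : ℕ → ℕ satisfy m(k) ∈ o(2^{k/2}). Then lim_{k→∞} ( τ(k, m(k)) − b(k−2, m(k)−1) / 2^{m(k)−1} ) = 0, where b(p,q) := Σ_{i=0}^{p} C(q,i). -/
open Finset Filter MeasureTheory

open scoped Classical

noncomputable section

/-- Reverse Pajor inequality: strongly shattered sets are at most as many as members. -/
lemma card_strong_le {m : ℕ} (F G : Finset (Finset (Fin m)))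
    (h : ∀ X ∈ G, ∃ u : Finset (Fin m), ∀ t, t ⊆ X → t ∪ (u \ X) ∈ F) : G.card ≤ F.card := by
  have h1 : (Fᶜ).card ≤ (Fᶜ).shatterer.card := Finset.card_le_card_shatterer _
  have h2 : (G.image (fun X => Xᶜ)) ⊆ ((Fᶜ).shatterer)ᶜ := by
    intro Z hZ
    obtain ⟨X, hX, rfl⟩ := Finset.mem_image.1 hZ
    rw [Finset.mem_compl, Finset.mem_shatterer]
    intro hs
    obtain ⟨u, hu⟩ := h X hX
    obtain ⟨v, hv, hvu⟩ := hs (t := u \ X) (by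
      intro a ha; simp only [Finset.mem_sdiff] at ha; simpa using ha.2)
    rw [Finset.mem_compl] at hv
    apply hv
    have : v = (v ∩ X) ∪ (u \ X) := by
      rw [← hvu]; ext a; simp only [Finset.mem_union, Finset.mem_inter, Finset.mem_compl]; tauto
    rw [this]
    exact hu _ Finset.inter_subset_right
  have h3 := Finset.card_le_card h2
  rw [Finset.card_image_of_injective _ compl_injective] at h3
  rw [Finset.card_compl] at h1 h3
  have := Finset.card_le_univ F
  have := Finset.card_le_univ (Fᶜ).shatterer
  omega

/-- The sign pattern `A` is realized on `v` by a functional vanishing on `u`. -/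
def SepPat {k m : ℕ} (u : Fin k → ℝ) (v : Fin m → Fin k → ℝ) (A : Finset (Fin m)) : Prop :=
  ∃ g : Module.Dual ℝ (Fin k → ℝ), g u = 0 ∧
    ∀ i, (i ∈ A → 0 < g (v i)) ∧ (i ∉ A → g (v i) < 0)

/-- The family of realized sign patterns. -/
def patFam {k m : ℕ} (u : Fin k → ℝ) (v : Fin m → Fin k → ℝ) : Finset (Finset (Fin m)) :=
  Finset.univ.filter (SepPat u v)

lemma card_le_of_shatters {k m : ℕ} (u : Fin k → ℝ) (hu : u ≠ 0) (v : Fin m → Fin k → ℝ)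
    (X : Finset (Fin m)) (h : (patFam u v).Shatters X) : X.card + 1 ≤ k := by
  have hli : LinearIndependent ℝ (fun o : Option X => o.elim u (fun i => v i)) := by
    rw [Fintype.linearIndependent_iff]
    intro c hc
    rw [Fintype.sum_option] at hc
    simp only [Option.elim] at hc
    obtain ⟨A, hA, hXA⟩ := h (t := X.filter (fun i => ∃ hi : i ∈ X, 0 < c (some ⟨i, hi⟩)))
      (Finset.filter_subset _ _)
    obtain ⟨g, hg0, hg⟩ := (Finset.mem_filter.1 hA).2
    have hmem : ∀ i : X, (i : Fin m) ∈ A ↔ 0 < c (some i) := by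
      intro i
      have := Finset.ext_iff.1 hXA i
      simp only [Finset.mem_inter, Finset.mem_filter, i.2, true_and, exists_true_left] at this
      exact this
    have e := congrArg g hc
    simp only [map_add, map_smul, map_sum, hg0, smul_eq_mul, mul_zero, zero_add, map_zero] at e
    have hnn : ∀ i ∈ (Finset.univ : Finset X), 0 ≤ c (some i) * g (v i) := by
      intro i _
      by_cases hi : (i : Fin m) ∈ A
      · exact mul_nonneg ((hmem i).1 hi).le ((hg i).1 hi).le
      · exact mul_nonneg_of_nonpos_of_nonpos (not_lt.1 (fun h => hi ((hmem i).2 h))) ((hg i).2 hi).le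
    rw [Finset.sum_eq_zero_iff_of_nonneg hnn] at e
    have hs : ∀ i : X, c (some i) = 0 := by
      intro i
      have := e i (Finset.mem_univ _)
      rcases mul_eq_zero.1 this with h | h
      · exact h
      · exfalso
        by_cases hi : (i : Fin m) ∈ A
        · exact ((hg i).1 hi).ne' h
        · exact ((hg i).2 hi).ne h
    intro o
    cases o with
    | some i => exact hs i
    | none =>
      simp only [hs, zero_smul, Finset.sum_const_zero, add_zero] at hc
      exact (smul_eq_zero.1 hc).resolve_right hu
  have := hli.fintype_card_le_finrank
  simpa using this

lemma card_filter_card_lt (m s : ℕ) :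
    ((Finset.univ : Finset (Finset (Fin m))).filter (fun X => X.card ≤ s)).card = bFn s m := by
  rw [Finset.card_eq_sum_card_fiberwise (f := Finset.card) (t := Finset.range (s + 1))]
  · unfold bFn
    apply Finset.sum_congr rfl
    intro i hi
    have : (Finset.powersetCard i (Finset.univ : Finset (Fin m))).card = m.choose i := by simp
    rw [← this]
    congr 1
    ext X
    simp only [Finset.mem_range] at hi
    simp only [Finset.mem_filter, Finset.mem_univ, true_and, Finset.mem_powersetCard, Finset.subset_univ]
    omega
  · intro X hX
    simp at hX ⊢; omega

lemma patFam_le {k m : ℕ} (hk : 1 ≤ k) (u : Fin k → ℝ) (hu : u ≠ 0) (v : Fin m → Fin k → ℝ) :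
    (patFam u v).card ≤ bFn (k - 1) m := by
  rw [← card_filter_card_lt]
  refine (Finset.card_le_card_shatterer _).trans (Finset.card_le_card ?_)
  intro X hX
  rw [Finset.mem_shatterer] at hX
  have := card_le_of_shatters u hu v X hX
  simp; omega

/-- `X` is in good position. -/
def GoodX {k m : ℕ} (u : Fin k → ℝ) (v : Fin m → Fin k → ℝ) (X : Finset (Fin m)) : Prop :=
  ∀ f, v f ∉ Submodule.span ℝ (insert u (v '' (X.erase f : Finset (Fin m))))

lemma GoodX.strong {k m : ℕ} {u : Fin k → ℝ} {v : Fin m → Fin k → ℝ} {X : Finset (Fin m)}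
    (h : GoodX u v X) : ∃ B : Finset (Fin m), ∀ t, t ⊆ X → t ∪ (B \ X) ∈ patFam u v := by
  have h1 : ∀ f, ∃ g : Module.Dual ℝ (Fin k → ℝ), g u = 0 ∧ g (v f) = 1 ∧
      ∀ i ∈ X, i ≠ f → g (v i) = 0 := by
    intro f
    obtain ⟨g, hg, hle⟩ := Submodule.exists_le_ker_of_notMem (h f)
    refine ⟨(g (v f))⁻¹ • g, ?_, ?_, ?_⟩
    · have : u ∈ g.ker := hle (Submodule.subset_span (Set.mem_insert _ _))
      simp [LinearMap.mem_ker.1 this]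
    · simp [hg]
    · intro i hi hif
      have : v i ∈ g.ker := hle (Submodule.subset_span (Set.mem_insert_of_mem _
        ⟨i, by simp [hi, hif], rfl⟩))
      simp [LinearMap.mem_ker.1 this]
  choose g hgu hg1 hg0 using h1
  let p : Submodule ℝ (Module.Dual ℝ (Fin k → ℝ)) :=
    (Submodule.span ℝ (insert u (v '' (X : Set (Fin m))))).dualAnnihilator
  obtain ⟨x, hxp, hx⟩ := Module.Dual.exists_forall_mem_ne_zero_of_forall_exists p
    (fun f : {f // f ∉ X} => Module.Dual.eval ℝ _ (v f)) (by
      intro f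
      refine ⟨g f, ?_, by simp [hg1]⟩
      rw [Submodule.mem_dualAnnihilator]
      intro w hw
      have : Submodule.span ℝ (insert u (v '' (X : Set (Fin m)))) ≤ (g f).ker := by
        rw [Submodule.span_le]
        rintro w (rfl | ⟨i, hi, rfl⟩)
        · exact hgu f
        · exact hg0 f i hi (fun e => f.2 (e ▸ hi))
      exact this hw)
  rw [Submodule.mem_dualAnnihilator] at hxp
  have hxu : x u = 0 := hxp _ (Submodule.subset_span (Set.mem_insert _ _))
  have hxX : ∀ i ∈ X, x (v i) = 0 := fun i hi =>
    hxp _ (Submodule.subset_span (Set.mem_insert_of_mem _ ⟨i, hi, rfl⟩))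
  have hxn : ∀ i, i ∉ X → x (v i) ≠ 0 := fun i hi => hx ⟨i, hi⟩
  refine ⟨Finset.univ.filter (fun i => 0 < x (v i)), fun t ht => ?_⟩
  let z : Module.Dual ℝ (Fin k → ℝ) := ∑ i ∈ X, (if i ∈ t then (1:ℝ) else -1) • g i
  have hzu : z u = 0 := by
    simp only [z, LinearMap.sum_apply, LinearMap.smul_apply, hgu, smul_zero, Finset.sum_const_zero]
  have hzX : ∀ i ∈ X, z (v i) = if i ∈ t then (1:ℝ) else -1 := by
    intro i hi
    simp only [z, LinearMap.sum_apply, LinearMap.smul_apply, smul_eq_mul]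
    rw [Finset.sum_eq_single i]
    · simp [hg1]
    · intro j hj hji
      rw [hg0 j i hi (Ne.symm hji), mul_zero]
    · intro h; exact absurd hi h
  -- choose a large multiple of `x`
  obtain ⟨c, hc⟩ : ∃ c : ℝ, 0 < c ∧ ∀ i, i ∉ X → |z (v i)| < c * |x (v i)| := by
    refine ⟨1 + ∑ i, |z (v i)| / |x (v i)|, ?_, ?_⟩
    · positivity
    · intro i hi
      have hp : 0 < |x (v i)| := abs_pos.2 (hxn i hi)
      have : |z (v i)| / |x (v i)| ≤ ∑ i, |z (v i)| / |x (v i)| :=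
        Finset.single_le_sum (f := fun i => |z (v i)| / |x (v i)|)
          (fun _ _ => by positivity) (Finset.mem_univ i)
      rw [← div_lt_iff₀ hp]; linarith
  refine Finset.mem_filter.2 ⟨Finset.mem_univ _, c • x + z, by simp [hxu, hzu], fun i => ?_⟩
  simp only [LinearMap.add_apply, LinearMap.smul_apply, smul_eq_mul]
  by_cases hi : i ∈ X
  · rw [hxX i hi, hzX i hi]
    simp only [Finset.mem_union, Finset.mem_sdiff, hi]
    by_cases hit : i ∈ t <;> simp [hit]
  · have hit : i ∉ t := fun h => hi (ht h)
    have h2 := abs_lt.1 (hc.2 i hi)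
    simp only [Finset.mem_union, Finset.mem_sdiff, Finset.mem_filter, Finset.mem_univ, hi, hit]
    rcases lt_or_gt_of_ne (hxn i hi) with h | h
    · rw [abs_of_neg h] at h2
      refine ⟨fun h' => ?_, fun _ => by linarith [h2.2]⟩
      simp at h'; linarith
    · rw [abs_of_pos h] at h2
      refine ⟨fun _ => by linarith [h2.1], fun h' => ?_⟩
      simp at h'; linarith

lemma good_le {k m : ℕ} (u : Fin k → ℝ) (v : Fin m → Fin k → ℝ) (s : ℕ) :
    ((Finset.univ : Finset (Finset (Fin m))).filter
      (fun X => X.card ≤ s ∧ GoodX u v X)).card ≤ (patFam u v).card := by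
  apply card_strong_le
  intro X hX
  exact (Finset.mem_filter.1 hX).2.2.strong

/-- Sign vector of a Boolean vector. -/
def sg {k : ℕ} (f : Fin k → Bool) : Fin k → ℝ := fun i => if f i then 1 else -1

lemma sg_injective {k : ℕ} : Function.Injective (sg (k := k)) := by
  intro f g h
  funext i
  have := congrFun h i
  unfold sg at this
  cases hf : f i <;> cases hg : g i <;> simp [hf, hg] at this ⊢ <;> norm_num at this

/-- Odlyzko's lemma. -/
lemma odlyzko {k : ℕ} (V : Submodule ℝ (Fin k → ℝ)) :
    ((Finset.univ : Finset (Fin k → Bool)).filter (fun w => sg w ∈ V)).card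
      ≤ 2 ^ (Module.finrank ℝ V) := by
  let co : Fin k → Module.Dual ℝ V := fun i => (LinearMap.proj i).domRestrict V
  obtain ⟨b, hbt, hspan, hli⟩ := exists_linearIndependent ℝ (Set.range co)
  have hfin : b.Finite := (Set.finite_range co).subset hbt
  have := hfin.fintype
  have hcard : Fintype.card b ≤ Module.finrank ℝ V := by
    have := hli.fintype_card_le_finrank
    rwa [Subspace.dual_finrank_eq] at this
  have hpick : ∀ x : b, ∃ i, co i = x := fun x => hbt x.2
  choose idx hidx using hpick
  have hinj : Set.InjOn (fun (w : Fin k → Bool) (x : b) => w (idx x))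
      ((Finset.univ : Finset (Fin k → Bool)).filter (fun w => sg w ∈ V) : Finset _) := by
    intro w hw w' hw' he
    have hwV : sg w ∈ V := by simpa using hw
    have hwV' : sg w' ∈ V := by simpa using hw'
    apply sg_injective
    let d : V := ⟨sg w, hwV⟩ - ⟨sg w', hwV'⟩
    have hle : Submodule.span ℝ b ≤ LinearMap.ker (Module.Dual.eval ℝ V d) := by
      rw [Submodule.span_le]
      intro x hx
      have h1 := hidx ⟨x, hx⟩
      have h2 := congrFun he ⟨x, hx⟩
      simp only at h1 h2
      rw [SetLike.mem_coe, LinearMap.mem_ker, Module.Dual.eval_apply, ← h1]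
      simp [co, d, sg, h2]
    rw [hspan] at hle
    funext i
    have := hle (Submodule.subset_span ⟨i, rfl⟩)
    rw [LinearMap.mem_ker, Module.Dual.eval_apply] at this
    simp [co, d] at this
    linarith
  have := Finset.card_le_card_of_injOn (t := (Finset.univ : Finset (b → Bool))) _
    (fun _ _ => Finset.mem_coe.2 (Finset.mem_univ _)) hinj
  refine this.trans ?_
  rw [Finset.card_univ, Fintype.card_fun, Fintype.card_bool]
  exact Nat.pow_le_pow_right (by norm_num) hcard

lemma card_bad_f {k m : ℕ} (u : Fin k → ℝ) (X : Finset (Fin m)) (f : Fin m) :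
    ((Finset.univ : Finset (Fin m → Fin k → Bool)).filter (fun y =>
      sg (y f) ∈ Submodule.span ℝ (insert u ((fun i => sg (y i)) '' (X.erase f : Finset (Fin m)))))).card
      ≤ 2 ^ (X.card + 1) * (2 ^ k) ^ (m - 1) := by
  have key := Finset.card_le_mul_card_image_of_maps_to
    (s := ((Finset.univ : Finset (Fin m → Fin k → Bool)).filter (fun y =>
      sg (y f) ∈ Submodule.span ℝ
        (insert u ((fun i => sg (y i)) '' (X.erase f : Finset (Fin m)))))))
    (f := fun y (j : {j // j ≠ f}) => y j) (t := Finset.univ)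
    (fun _ _ => Finset.mem_univ _) (2 ^ (X.card + 1)) (by
      intro z _
      by_cases hne : (((Finset.univ : Finset (Fin m → Fin k → Bool)).filter (fun y =>
        sg (y f) ∈ Submodule.span ℝ
        (insert u ((fun i => sg (y i)) '' (X.erase f : Finset (Fin m)))))).filter
          (fun y => (fun (j : {j // j ≠ f}) => y j) = z)).Nonempty
      swap
      · rw [Finset.not_nonempty_iff_eq_empty] at hne
        rw [hne]; simp
      obtain ⟨y0, hy0⟩ := hne
      have hy0z := (Finset.mem_filter.1 hy0).2
      have hfr : Module.finrank ℝ (Submodule.span ℝ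
        (insert u ((fun i => sg (y0 i)) '' (X.erase f : Finset (Fin m))))) ≤ X.card + 1 := by
        have := finrank_span_finset_le_card (R := ℝ)
          (insert u ((X.erase f).image (fun i => sg (y0 i))))
        rw [Set.finrank, Finset.coe_insert, Finset.coe_image] at this
        refine this.trans ((Finset.card_insert_le _ _).trans ?_)
        exact Nat.succ_le_succ (Finset.card_image_le.trans (Finset.card_le_card (Finset.erase_subset _ _)))
      refine le_trans ?_ ((odlyzko _).trans (Nat.pow_le_pow_right (by norm_num) hfr))
      have hag : ∀ y : Fin m → Fin k → Bool, (fun (j : {j // j ≠ f}) => y j) = z →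
          ∀ i, i ≠ f → y i = y0 i := by
        intro y hy i hi
        rw [← hy0z] at hy
        exact congrFun hy ⟨i, hi⟩
      apply Finset.card_le_card_of_injOn (fun y => y f)
      · intro y hy
        rw [Finset.mem_coe, Finset.mem_filter, Finset.mem_filter] at hy
        rw [Finset.mem_coe, Finset.mem_filter]
        refine ⟨Finset.mem_univ _, ?_⟩
        have : ((fun i => sg (y i)) '' (X.erase f : Finset (Fin m))) =
          ((fun i => sg (y0 i)) '' (X.erase f : Finset (Fin m))) := by
          apply Set.image_congr
          intro i hi
          rw [hag y hy.2 i (Finset.ne_of_mem_erase hi)]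
        rw [← this]
        exact hy.1.2
      · intro y hy y' hy' he
        rw [Finset.mem_coe, Finset.mem_filter] at hy hy'
        funext i
        by_cases hi : i = f
        · rw [hi]; exact he
        · rw [hag y hy.2 i hi, hag y' hy'.2 i hi])
  refine key.trans (Nat.mul_le_mul_left _ ?_)
  rw [Finset.card_univ, Fintype.card_fun, Fintype.card_fun, Fintype.card_bool, Fintype.card_fin]
  apply le_of_eq
  congr 1
  simp [Fintype.card_subtype_compl]

lemma card_bad {k m : ℕ} (u : Fin k → ℝ) (X : Finset (Fin m)) :
    ((Finset.univ : Finset (Fin m → Fin k → Bool)).filter (fun y =>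
      ¬ GoodX u (fun i => sg (y i)) X)).card * 2 ^ k ≤ m * 2 ^ (X.card + 1) * (2 ^ k) ^ m := by
  have h : ((Finset.univ : Finset (Fin m → Fin k → Bool)).filter (fun y =>
      ¬ GoodX u (fun i => sg (y i)) X)) ⊆ Finset.univ.biUnion (fun f =>
      ((Finset.univ : Finset (Fin m → Fin k → Bool)).filter (fun y =>
      sg (y f) ∈ Submodule.span ℝ (insert u ((fun i => sg (y i)) '' (X.erase f : Finset (Fin m))))))) := by
    intro y hy
    have := (Finset.mem_filter.1 hy).2
    unfold GoodX at this
    push Not at this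
    obtain ⟨f, hf⟩ := this
    exact Finset.mem_biUnion.2 ⟨f, Finset.mem_univ _, Finset.mem_filter.2 ⟨Finset.mem_univ _, hf⟩⟩
  have h2 := (Finset.card_le_card h).trans (Finset.card_biUnion_le_card_mul _ _ _
    (fun f _ => card_bad_f u X f))
  rcases m with _ | m
  · simp at h2 ⊢; exact h2
  simp only [Finset.card_univ, Fintype.card_fin, Nat.add_sub_cancel] at h2
  calc _ ≤ _ := Nat.mul_le_mul_right _ h2
    _ = _ := by ring

/-- Flip the signs outside `A`. -/
def flipA {k m : ℕ} (A : Finset (Fin m)) (y : Fin m → Fin k → Bool) : Fin m → Fin k → Bool :=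
  fun i j => if i ∈ A then y i j else !(y i j)

lemma flipA_invol {k m : ℕ} (A : Finset (Fin m)) :
    Function.Involutive (flipA (k := k) A) := by
  intro y
  funext i j
  unfold flipA
  by_cases h : i ∈ A <;> simp [h]

lemma sg_flipA {k m : ℕ} (A : Finset (Fin m)) (y : Fin m → Fin k → Bool) (i : Fin m) :
    sg (flipA A y i) = if i ∈ A then sg (y i) else - sg (y i) := by
  funext j
  unfold sg flipA
  by_cases h : i ∈ A
  · simp [h]
  · cases hy : y i j <;> simp [h, hy]

lemma sep_flip {k m : ℕ} (u : Fin k → ℝ) (A : Finset (Fin m)) (y : Fin m → Fin k → Bool) :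
    SepPat u (fun i => sg (flipA A y i)) Finset.univ ↔ SepPat u (fun i => sg (y i)) A := by
  unfold SepPat
  apply exists_congr
  intro g
  apply and_congr Iff.rfl
  apply forall_congr'
  intro i
  simp only [sg_flipA]
  by_cases h : i ∈ A <;> simp [h]

/-- The sequences for which the event holds. -/
def evS {k : ℕ} (u : Fin k → ℝ) (m : ℕ) : Finset (Fin m → Fin k → Bool) :=
  Finset.univ.filter (fun y => SepPat u (fun i => sg (y i)) Finset.univ)

lemma sum_patFam {k m : ℕ} (u : Fin k → ℝ) :
    ∑ y : Fin m → Fin k → Bool, (patFam u (fun i => sg (y i))).card = 2 ^ m * (evS u m).card := by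
  unfold patFam
  simp_rw [Finset.card_filter]
  rw [Finset.sum_comm]
  have : ∀ A : Finset (Fin m), ∑ y : Fin m → Fin k → Bool,
      (if SepPat u (fun i => sg (y i)) A then 1 else 0) = (evS u m).card := by
    intro A
    unfold evS
    rw [Finset.card_filter]
    conv_rhs => rw [← Equiv.sum_comp (flipA_invol (k := k) A).toPerm]
    apply Finset.sum_congr rfl
    intro y _
    simp only [Function.Involutive.coe_toPerm, sep_flip]
  rw [Finset.sum_congr rfl (fun A _ => this A)]
  simp

lemma cardN (k m : ℕ) : Fintype.card (Fin m → Fin k → Bool) = (2 ^ k) ^ m := by simp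

lemma ev_upper {k m : ℕ} (hk : 1 ≤ k) (u : Fin k → ℝ) (hu : u ≠ 0) :
    2 ^ m * (evS u m).card ≤ (2 ^ k) ^ m * bFn (k - 1) m := by
  rw [← sum_patFam, ← cardN, ← Finset.card_univ, ← smul_eq_mul]
  exact Finset.sum_le_card_nsmul _ _ _ (fun y _ => patFam_le hk u hu _)

lemma bFn_le (s m : ℕ) : bFn s m ≤ 2 ^ m := by
  rw [← card_filter_card_lt]
  refine (Finset.card_le_univ _).trans ?_
  simp

lemma ev_lower {k m : ℕ} (u : Fin k → ℝ) (s : ℕ) :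
    bFn s m * (2 ^ k) ^ m * 2 ^ k ≤ 2 ^ m * (evS u m).card * 2 ^ k
      + 2 ^ m * (m * 2 ^ (s + 1) * (2 ^ k) ^ m) := by
  have h1 : ∑ y : Fin m → Fin k → Bool, ((Finset.univ : Finset (Finset (Fin m))).filter
      (fun X => X.card ≤ s ∧ GoodX u (fun i => sg (y i)) X)).card ≤ 2 ^ m * (evS u m).card := by
    rw [← sum_patFam]
    exact Finset.sum_le_sum (fun y _ => good_le u _ s)
  have h2 : ∑ y : Fin m → Fin k → Bool, ((Finset.univ : Finset (Finset (Fin m))).filter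
      (fun X => X.card ≤ s ∧ GoodX u (fun i => sg (y i)) X)).card =
      ∑ X ∈ (Finset.univ : Finset (Finset (Fin m))).filter (fun X => X.card ≤ s),
        ((Finset.univ : Finset (Fin m → Fin k → Bool)).filter (fun y =>
          GoodX u (fun i => sg (y i)) X)).card := by
    simp_rw [← Finset.filter_filter, Finset.card_filter]
    rw [Finset.sum_comm]
  have h3 : ∀ X ∈ (Finset.univ : Finset (Finset (Fin m))).filter (fun X => X.card ≤ s),
      (2 ^ k) ^ m * 2 ^ k ≤ ((Finset.univ : Finset (Fin m → Fin k → Bool)).filter (fun y =>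
          GoodX u (fun i => sg (y i)) X)).card * 2 ^ k + m * 2 ^ (s + 1) * (2 ^ k) ^ m := by
    intro X hX
    have hXs := (Finset.mem_filter.1 hX).2
    have hb := card_bad (k := k) u X
    have hs := Finset.card_filter_add_card_filter_not (s := (Finset.univ : Finset (Fin m → Fin k → Bool)))
      (fun y => GoodX u (fun i => sg (y i)) X)
    rw [Finset.card_univ, cardN] at hs
    have hp : m * 2 ^ (X.card + 1) * (2 ^ k) ^ m ≤ m * 2 ^ (s + 1) * (2 ^ k) ^ m :=
      Nat.mul_le_mul_right _ (Nat.mul_le_mul_left _ (Nat.pow_le_pow_right (by norm_num) (by omega)))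
    rw [← hs, add_mul]
    rw [hs]
    omega
  have h4 := Finset.sum_le_sum h3
  rw [Finset.sum_const, card_filter_card_lt, Finset.sum_add_distrib, Finset.sum_const,
    card_filter_card_lt, ← Finset.sum_mul, ← h2, smul_eq_mul, smul_eq_mul] at h4
  calc _ = bFn s m * ((2 ^ k) ^ m * 2 ^ k) := by ring
    _ ≤ _ := h4
    _ ≤ _ := Nat.add_le_add (Nat.mul_le_mul_right _ h1) (Nat.mul_le_mul_right _ (bFn_le s m))

lemma card_det {k m : ℕ} (S : Finset (Fin m → Fin k → Bool)) (i : Fin m)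
    (h : ∀ y ∈ S, ∀ y' ∈ S, (∀ j, j ≠ i → y j = y' j) → y i = y' i) :
    S.card * 2 ^ k ≤ (2 ^ k) ^ m := by
  have hinj : Set.InjOn (fun (y : Fin m → Fin k → Bool) (j : {j // j ≠ i}) => y j) (S : Set _) := by
    intro y hy y' hy' he
    have hj : ∀ j, j ≠ i → y j = y' j := fun j hj => congrFun he ⟨j, hj⟩
    funext j
    by_cases hji : j = i
    · rw [hji]; exact h y hy y' hy' hj
    · exact hj j hji
  have h1 := Finset.card_le_card_of_injOn (t := Finset.univ) _
    (fun _ _ => Finset.mem_coe.2 (Finset.mem_univ _)) hinj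
  rw [Finset.card_univ, Fintype.card_fun, Fintype.card_fun, Fintype.card_bool, Fintype.card_fin] at h1
  have h2 : Fintype.card {j // j ≠ i} = m - 1 := by simp [Fintype.card_subtype_compl]
  rw [h2] at h1
  have hm : m = (m - 1) + 1 := by have := i.2; omega
  calc _ ≤ (2 ^ k) ^ (m - 1) * 2 ^ k := Nat.mul_le_mul_right _ h1
    _ = (2 ^ k) ^ ((m - 1) + 1) := by rw [pow_succ]
    _ = _ := by rw [← hm]

/-- Injective sequences in `C_*`. -/
def gdS (k m : ℕ) : Finset (Fin m → Fin k → Bool) :=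
  Finset.univ.filter (fun y => Function.Injective y ∧ ∀ i, sg (y i) ∈ pmCubeStar k)

lemma mem_pmCube_s14 {k : ℕ} (x : Fin k → ℝ) : x ∈ pmCube k ↔ ∃ w, sg w = x := by
  unfold pmCube
  rw [Finset.mem_image]
  constructor
  · rintro ⟨w, _, h⟩; exact ⟨w, h⟩
  · rintro ⟨w, h⟩; exact ⟨w, Finset.mem_univ _, h⟩

lemma mem_star_s14 {k : ℕ} (w : Fin k → Bool) (h1 : w ≠ fun _ => true) (h2 : w ≠ fun _ => false) :
    sg w ∈ pmCubeStar k := by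
  unfold pmCubeStar
  rw [Finset.mem_sdiff]
  refine ⟨(mem_pmCube_s14 _).2 ⟨w, rfl⟩, ?_⟩
  rw [Finset.mem_insert, Finset.mem_singleton, not_or]
  constructor
  · intro h; apply h2; apply sg_injective; rw [h]; funext i; simp [sg, allOne]
  · intro h; apply h1; apply sg_injective; rw [h]; funext i; simp [sg, allOne]

lemma card_nongood (k m : ℕ) :
    ((gdS k m)ᶜ).card * 2 ^ k ≤ (m * m + 2 * m) * (2 ^ k) ^ m := by
  let S1 : Fin m × Fin m → Finset (Fin m → Fin k → Bool) := fun p =>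
    Finset.univ.filter (fun y => p.1 ≠ p.2 ∧ y p.1 = y p.2)
  let S2 : Fin m × Bool → Finset (Fin m → Fin k → Bool) := fun p =>
    Finset.univ.filter (fun y => y p.1 = fun _ => p.2)
  have hsub : (gdS k m)ᶜ ⊆ Finset.univ.biUnion S1 ∪ Finset.univ.biUnion S2 := by
    intro y hy
    by_contra hc
    rw [Finset.mem_union, not_or] at hc
    simp only [S1, S2, Finset.mem_biUnion, Finset.mem_univ, Finset.mem_filter, true_and,
      not_exists, Prod.forall] at hc
    rw [Finset.mem_compl] at hy
    apply hy
    refine Finset.mem_filter.2 ⟨Finset.mem_univ _, ?_, fun i => mem_star_s14 _ (hc.2 i _) (hc.2 i _)⟩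
    intro i j hij
    by_contra hne
    exact hc.1 i j ⟨hne, hij⟩
  have e1 : ∀ p, (S1 p).card * 2 ^ k ≤ (2 ^ k) ^ m := by
    intro p
    apply card_det _ p.1
    intro y hy y' hy' hj
    have a := (Finset.mem_filter.1 hy).2
    have b := (Finset.mem_filter.1 hy').2
    rw [a.2, b.2]
    exact hj _ (Ne.symm a.1)
  have e2 : ∀ p, (S2 p).card * 2 ^ k ≤ (2 ^ k) ^ m := by
    intro p
    apply card_det _ p.1
    intro y hy y' hy' hj
    rw [(Finset.mem_filter.1 hy).2, (Finset.mem_filter.1 hy').2]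
  have c1 : (Finset.univ.biUnion S1).card * 2 ^ k ≤ (m * m) * (2 ^ k) ^ m := by
    calc _ ≤ (∑ p, (S1 p).card) * 2 ^ k := Nat.mul_le_mul_right _ Finset.card_biUnion_le
      _ = ∑ p, (S1 p).card * 2 ^ k := Finset.sum_mul _ _ _
      _ ≤ ∑ p : Fin m × Fin m, (2 ^ k) ^ m := Finset.sum_le_sum (fun p _ => e1 p)
      _ = _ := by simp
  have c2 : (Finset.univ.biUnion S2).card * 2 ^ k ≤ (2 * m) * (2 ^ k) ^ m := by
    calc _ ≤ (∑ p, (S2 p).card) * 2 ^ k := Nat.mul_le_mul_right _ Finset.card_biUnion_le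
      _ = ∑ p, (S2 p).card * 2 ^ k := Finset.sum_mul _ _ _
      _ ≤ ∑ p : Fin m × Bool, (2 ^ k) ^ m := Finset.sum_le_sum (fun p _ => e2 p)
      _ = _ := by simp; ring
  have := (Finset.card_le_card hsub).trans (Finset.card_union_le _ _)
  calc _ ≤ _ := Nat.mul_le_mul_right _ this
    _ ≤ _ := by rw [add_mul, add_mul]; exact Nat.add_le_add c1 c2

lemma card_gd_filter (k m : ℕ) (P : Finset (Fin k → ℝ) → Prop) :
    ((gdS k m).filter (fun y => P (Finset.univ.image (fun i => sg (y i))))).card =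
      (((pmCubeStar k).powersetCard m).filter P).card * m.factorial := by
  rw [Finset.card_eq_sum_card_fiberwise (f := fun y => Finset.univ.image (fun i => sg (y i)))
    (t := ((pmCubeStar k).powersetCard m).filter P)]
  · rw [← smul_eq_mul]
    apply Finset.sum_const_nat
    intro Y hY
    rw [Finset.mem_filter, Finset.mem_powersetCard] at hY
    obtain ⟨⟨hYs, hYc⟩, hP⟩ := hY
    have hf : m.factorial = Fintype.card (Fin m ↪ Y) := by
      rw [Fintype.card_embedding_eq, Fintype.card_coe, hYc, Fintype.card_fin, Nat.descFactorial_self]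
    rw [hf, ← Finset.card_univ]
    symm
    have hw : ∀ x : Y, ∃ w, sg w = (x : Fin k → ℝ) := fun x =>
      (mem_pmCube_s14 _).1 (Finset.sdiff_subset (hYs x.2))
    choose w hw using hw
    apply Finset.card_bij (fun (e : Fin m ↪ Y) _ => fun i => w (e i))
    · intro e _
      have him : Finset.univ.image (fun i => sg (w (e i))) = Y := by
        apply Finset.eq_of_subset_of_card_le
        · intro x hx
          obtain ⟨i, _, rfl⟩ := Finset.mem_image.1 hx
          rw [hw]; exact (e i).2
        · rw [Finset.card_image_of_injective, Finset.card_univ, Fintype.card_fin, hYc]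
          intro i j hij
          simp only [hw] at hij
          exact e.injective (Subtype.ext hij)
      rw [Finset.mem_filter, Finset.mem_filter]
      refine ⟨⟨Finset.mem_filter.2 ⟨Finset.mem_univ _, ?_, ?_⟩, ?_⟩, him⟩
      · intro i j hij
        have := congrArg sg hij
        simp only [hw] at this
        exact e.injective (Subtype.ext this)
      · intro i; rw [hw]; exact hYs (e i).2
      · rw [him]; exact hP
    · intro e _ e' _ h
      apply DFunLike.ext
      intro i
      have := congrArg sg (congrFun h i)
      simp only [hw] at this
      exact Subtype.ext this
    · intro y hy
      rw [Finset.mem_filter, Finset.mem_filter] at hy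
      obtain ⟨⟨hg, _⟩, him⟩ := hy
      have hinj := (Finset.mem_filter.1 hg).2.1
      have hmem : ∀ i, sg (y i) ∈ Y := by
        intro i; rw [← him]; exact Finset.mem_image.2 ⟨i, Finset.mem_univ _, rfl⟩
      refine ⟨⟨fun i => ⟨sg (y i), hmem i⟩, ?_⟩, Finset.mem_univ _, ?_⟩
      · intro i j hij
        exact hinj (sg_injective (congrArg Subtype.val hij))
      · funext i
        apply sg_injective
        rw [hw]
        rfl
  · intro y hy
    rw [Finset.mem_coe, Finset.mem_filter] at hy
    rw [Finset.mem_coe, Finset.mem_filter, Finset.mem_powersetCard]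
    have hg := (Finset.mem_filter.1 hy.1).2
    refine ⟨⟨?_, ?_⟩, hy.2⟩
    · intro x hx
      obtain ⟨i, _, rfl⟩ := Finset.mem_image.1 hx
      exact hg.2 i
    · rw [Finset.card_image_of_injective _ (fun i j hij => hg.1 (sg_injective hij))]
      simp

lemma conv_iff {k m : ℕ} (hk : 1 ≤ k) (y : Fin m → Fin k → Bool) :
    convexHull ℝ ((Finset.univ.image (fun i => sg (y i)) : Finset (Fin k → ℝ)) : Set (Fin k → ℝ)) ∩
      segment ℝ (-(allOne k)) (allOne k) = ∅ ↔
    SepPat (allOne k) (fun i => sg (y i)) Finset.univ := by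
  set Y : Finset (Fin k → ℝ) := Finset.univ.image (fun i => sg (y i)) with hY
  have hmem : ∀ i, sg (y i) ∈ (Y : Set (Fin k → ℝ)) := by
    intro i; rw [hY]; exact Finset.mem_coe.2 (Finset.mem_image.2 ⟨i, Finset.mem_univ _, rfl⟩)
  constructor
  · intro h
    have hdisj : Disjoint (convexHull ℝ (Y : Set (Fin k → ℝ)))
        ((ℝ ∙ (allOne k) : Submodule ℝ (Fin k → ℝ)) : Set (Fin k → ℝ)) := by
      rw [Set.disjoint_left]
      intro x hx hxl
      obtain ⟨c, rfl⟩ := Submodule.mem_span_singleton.1 hxl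
      have hbox : convexHull ℝ (Y : Set (Fin k → ℝ)) ⊆ Set.Icc (-(allOne k)) (allOne k) := by
        apply convexHull_min _ (convex_Icc _ _)
        intro z hz
        obtain ⟨i, _, rfl⟩ := Finset.mem_image.1 (Finset.mem_coe.1 hz)
        constructor <;> intro j <;> simp only [sg, allOne, Pi.neg_apply] <;> split_ifs <;> norm_num
      have hb := hbox hx
      have h1 := hb.1 ⟨0, hk⟩
      have h2 := hb.2 ⟨0, hk⟩
      simp [allOne] at h1 h2
      have : c • allOne k ∈ (∅ : Set (Fin k → ℝ)) := by
        rw [← h]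
        refine ⟨hx, (1 - c) / 2, (1 + c) / 2, by linarith, by linarith, by ring, ?_⟩
        funext j
        simp [allOne]; ring
      exact this
    obtain ⟨f, a, b, hfa, hab, hfb⟩ := geometric_hahn_banach_compact_closed
      (convex_convexHull ℝ _) (Set.Finite.isCompact_convexHull (𝕜 := ℝ) (Finset.finite_toSet Y))
      (Submodule.convex (ℝ ∙ (allOne k))) (Submodule.closed_of_finiteDimensional _) hdisj
    have hb0 : b < 0 := by simpa using hfb 0 (Submodule.zero_mem _)
    have hf1 : f (allOne k) = 0 := by
      by_contra hne
      have := hfb ((b / f (allOne k)) • allOne k)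
        (Submodule.smul_mem _ _ (Submodule.mem_span_singleton_self _))
      rw [map_smul, smul_eq_mul, div_mul_cancel₀ _ hne] at this
      exact lt_irrefl _ this
    refine ⟨-(f : (Fin k → ℝ) →ₗ[ℝ] ℝ), by simp [hf1], fun i => ⟨fun _ => ?_, fun h => absurd (Finset.mem_univ _) h⟩⟩
    have := hfa _ (subset_convexHull ℝ _ (hmem i))
    simp only [LinearMap.neg_apply, ContinuousLinearMap.coe_coe]
    linarith
  · rintro ⟨g, hg0, hg⟩
    rw [Set.eq_empty_iff_forall_notMem]
    rintro x ⟨hx, hxs⟩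
    have h1 : convexHull ℝ (Y : Set (Fin k → ℝ)) ⊆ {z | 0 < g z} := by
      apply convexHull_min _ (convex_halfSpace_gt g.isLinear 0)
      intro z hz
      obtain ⟨i, _, rfl⟩ := Finset.mem_image.1 (Finset.mem_coe.1 hz)
      exact (hg i).1 (Finset.mem_univ _)
    have h2 := h1 hx
    obtain ⟨a, b, _, _, _, rfl⟩ := hxs
    simp [hg0] at h2

/-- Comparison of `tau` with the i.i.d. model. -/
lemma tau_approx {k : ℕ} (hk : 1 ≤ k) (m : ℕ) :
    |tau k m - ((evS (allOne k) m).card : ℝ) / ((2 : ℝ) ^ k) ^ m| ≤ (m * m + 2 * m) / (2 : ℝ) ^ k := by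
  have hN : (0 : ℝ) < ((2 : ℝ) ^ k) ^ m := by positivity
  have htau : tau k m = (((gdS k m ∩ evS (allOne k) m).card : ℕ) : ℝ) / ((gdS k m).card : ℝ) := by
    have h1 := card_gd_filter k m (fun Y => convexHull ℝ (Y : Set (Fin k → ℝ)) ∩
      segment ℝ (-(allOne k)) (allOne k) = ∅)
    have h2 := card_gd_filter k m (fun _ => True)
    simp only [Finset.filter_true] at h2
    have h3 : (gdS k m).filter (fun y => convexHull ℝ
        ((Finset.univ.image (fun i => sg (y i)) : Finset (Fin k → ℝ)) : Set (Fin k → ℝ)) ∩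
      segment ℝ (-(allOne k)) (allOne k) = ∅) = gdS k m ∩ evS (allOne k) m := by
      ext y
      simp only [Finset.mem_filter, Finset.mem_inter, conv_iff hk, evS, Finset.mem_univ, true_and]
    have h1' : (gdS k m ∩ evS (allOne k) m).card =
        (((pmCubeStar k).powersetCard m).filter (fun Y =>
          convexHull ℝ (Y : Set (Fin k → ℝ)) ∩
            segment ℝ (-(allOne k)) (allOne k) = ∅)).card * m.factorial := by
      rw [← h3]
      convert h1
      refine (Finset.card_bij (fun (Y : Finset (Fin k → ℝ)) _ => (Y : Set (Fin k → ℝ))) ?_ ?_ ?_).symm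
      · intro Y hY
        rw [Finset.mem_filter] at hY ⊢
        refine ⟨?_, hY.2⟩
        simp only [Finset.bind_def, Finset.mem_sup, Finset.pure_def, Finset.mem_singleton]
        exact ⟨Y, hY.1, rfl⟩
      · intro Y _ Y' _ h
        exact Finset.coe_injective h
      · intro Z hZ
        rw [Finset.mem_filter] at hZ
        obtain ⟨hZ1, hZ2⟩ := hZ
        simp only [Finset.bind_def, Finset.mem_sup, Finset.pure_def, Finset.mem_singleton] at hZ1
        obtain ⟨Y, hY, rfl⟩ := hZ1
        exact ⟨Y, Finset.mem_filter.2 ⟨hY, hZ2⟩, rfl⟩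
    rw [h1', h2]
    unfold tau
    push_cast
    rw [mul_div_mul_right]
    exact_mod_cast (Nat.factorial_pos m).ne'
  have hbad := card_nongood k m
  have hcompl : ((gdS k m).card : ℝ) + ((gdS k m)ᶜ).card = ((2 : ℝ) ^ k) ^ m := by
    have := Finset.card_add_card_compl (gdS k m)
    rw [cardN] at this
    exact_mod_cast this
  have hle1 : ((gdS k m ∩ evS (allOne k) m).card : ℝ) ≤ (gdS k m).card := by
    exact_mod_cast Finset.card_le_card Finset.inter_subset_left
  have hle2 : ((gdS k m ∩ evS (allOne k) m).card : ℝ) ≤ (evS (allOne k) m).card := by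
    exact_mod_cast Finset.card_le_card Finset.inter_subset_right
  have hle3 : ((evS (allOne k) m).card : ℝ) ≤ (gdS k m ∩ evS (allOne k) m).card + ((gdS k m)ᶜ).card := by
    have : evS (allOne k) m ⊆ (gdS k m ∩ evS (allOne k) m) ∪ (gdS k m)ᶜ := by
      intro y hy; simp only [Finset.mem_union, Finset.mem_inter, Finset.mem_compl]; tauto
    exact_mod_cast (Finset.card_le_card this).trans (Finset.card_union_le _ _)
  have hB : (((gdS k m)ᶜ).card : ℝ) / ((2 : ℝ) ^ k) ^ m ≤ (m * m + 2 * m) / (2 : ℝ) ^ k := by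
    rw [div_le_div_iff₀ hN (by positivity)]
    exact_mod_cast hbad
  refine le_trans ?_ hB
  rw [htau]
  set I : ℝ := ((gdS k m ∩ evS (allOne k) m).card : ℝ)
  set G : ℝ := ((gdS k m).card : ℝ) with hGdef
  set E : ℝ := ((evS (allOne k) m).card : ℝ)
  set B : ℝ := (((gdS k m)ᶜ).card : ℝ)
  set N : ℝ := ((2 : ℝ) ^ k) ^ m
  have hI : 0 ≤ I := Nat.cast_nonneg _
  have hG : 0 ≤ G := Nat.cast_nonneg _
  have hB0 : 0 ≤ B := Nat.cast_nonneg _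
  have hq1 : I / G ≤ 1 := div_le_one_of_le₀ hle1 hG
  have hq0 : 0 ≤ I / G := by positivity
  have hIG : I / G * G = I := by
    rcases hG.eq_or_lt with h | h
    · rw [← h] at hle1 ⊢; simp; linarith
    · exact div_mul_cancel₀ _ h.ne'
  have key : I / G - E / N = (I / G * N - E) / N := by field_simp
  rw [key, abs_div, abs_of_pos hN]
  apply div_le_div_of_nonneg_right _ hN.le
  rw [← hcompl, mul_add, hIG, abs_le]
  constructor
  · nlinarith
  · nlinarith

lemma bFn_mono {p q : ℕ} (h : p ≤ q) (n : ℕ) : bFn p n ≤ bFn q n := by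
  unfold bFn
  exact Finset.sum_le_sum_of_subset (by intro a; simp; omega)

lemma bFn_succ (p n : ℕ) : bFn (p + 1) (n + 1) = bFn (p + 1) n + bFn p n := by
  unfold bFn
  rw [Finset.sum_range_succ' _ (p + 1), Finset.sum_range_succ' _ (p + 1)]
  simp only [Nat.choose_succ_succ, Finset.sum_add_distrib, Nat.choose_zero_right]
  simp only [Nat.succ_eq_add_one]
  ring

lemma bFn_zero (p : ℕ) : bFn p 0 = 1 := by
  unfold bFn
  rw [Finset.sum_range_succ']; simp

lemma p_bounds (p m : ℕ) : (bFn p m : ℝ) / 2 ^ m ≤ (bFn p (m - 1) : ℝ) / 2 ^ (m - 1) ∧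
    (bFn p (m - 1) : ℝ) / 2 ^ (m - 1) ≤ (bFn (p + 1) m : ℝ) / 2 ^ m := by
  rcases m with _ | n
  · simp [bFn_zero]
  · simp only [Nat.add_sub_cancel]
    have e : (bFn p n : ℝ) / 2 ^ n = (2 * bFn p n : ℕ) / 2 ^ (n + 1) := by
      push_cast; rw [pow_succ]; field_simp
    rw [e]
    have h1 : bFn p (n + 1) ≤ 2 * bFn p n := by
      rcases p with _ | q
      · simp [bFn]
      · rw [bFn_succ]; have := bFn_mono (Nat.le_succ q) n; simp only [Nat.succ_eq_add_one] at this; omega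
    have h2 : 2 * bFn p n ≤ bFn (p + 1) (n + 1) := by
      rw [bFn_succ]; have := bFn_mono (Nat.le_succ p) n; simp only [Nat.succ_eq_add_one] at this; omega
    constructor
    · apply div_le_div_of_nonneg_right _ (by positivity); exact_mod_cast h1
    · apply div_le_div_of_nonneg_right _ (by positivity); exact_mod_cast h2

lemma cb_bound (j : ℕ) : (Nat.centralBinom j) ^ 2 * (2 * j + 1) ≤ 16 ^ j := by
  induction j with
  | zero => simp
  | succ n ih =>
    have h := Nat.succ_mul_centralBinom_succ n
    have hpos : 0 < (n + 1) ^ 2 := by positivity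
    apply Nat.le_of_mul_le_mul_left _ hpos
    calc (n + 1) ^ 2 * ((n + 1).centralBinom ^ 2 * (2 * (n + 1) + 1))
        = ((n + 1) * (n + 1).centralBinom) ^ 2 * (2 * n + 3) := by ring
      _ = (n.centralBinom ^ 2 * (2 * n + 1)) * (4 * (2 * n + 1) * (2 * n + 3)) := by rw [h]; ring
      _ ≤ 16 ^ n * (4 * (2 * n + 1) * (2 * n + 3)) := Nat.mul_le_mul_right _ ih
      _ ≤ 16 ^ n * ((n + 1) ^ 2 * 16) := Nat.mul_le_mul_left _ (by nlinarith)
      _ = _ := by ring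

lemma choose_sq (n i : ℕ) : (n.choose i) ^ 2 * n ≤ 4 ^ n := by
  rcases Nat.even_or_odd' n with ⟨j, rfl | rfl⟩
  · have h := Nat.choose_le_centralBinom i j
    calc _ ≤ (Nat.centralBinom j) ^ 2 * (2 * j + 1) :=
          Nat.mul_le_mul (Nat.pow_le_pow_left h 2) (by omega)
      _ ≤ 16 ^ j := cb_bound j
      _ = _ := by rw [pow_mul]; norm_num
  · have h : (2 * j + 1).choose i ≤ 2 * Nat.centralBinom j := by
      rcases i with _ | i
      · have := Nat.choose_le_centralBinom 0 j; simp at this ⊢; omega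
      · rw [Nat.choose_succ_succ]
        have h1 := Nat.choose_le_centralBinom i j
        have h2 := Nat.choose_le_centralBinom (i + 1) j
        simp only [Nat.succ_eq_add_one]
        omega
    calc _ ≤ (2 * Nat.centralBinom j) ^ 2 * (2 * j + 1) :=
          Nat.mul_le_mul (Nat.pow_le_pow_left h 2) le_rfl
      _ = 4 * (Nat.centralBinom j ^ 2 * (2 * j + 1)) := by ring
      _ ≤ 4 * 16 ^ j := Nat.mul_le_mul_left _ (cb_bound j)
      _ = _ := by rw [pow_succ, pow_mul]; norm_num; ring

lemma choose_T (n i : ℕ) (T : ℝ) (hT : 0 < T) (h : T ^ 2 ≤ n) :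
    (n.choose i : ℝ) ≤ 2 ^ n / T := by
  rw [le_div_iff₀ hT]
  refine (sq_le_sq₀ (by positivity) (by positivity)).1 ?_
  have h1 : ((n.choose i : ℝ)) ^ 2 * n ≤ 4 ^ n := by exact_mod_cast choose_sq n i
  calc ((n.choose i : ℝ) * T) ^ 2 = (n.choose i : ℝ) ^ 2 * T ^ 2 := by ring
    _ ≤ (n.choose i : ℝ) ^ 2 * n := by gcongr
    _ ≤ 4 ^ n := h1
    _ = (2 ^ n) ^ 2 := by rw [← pow_mul, mul_comm, pow_mul]; norm_num

lemma iid_approx {k m t : ℕ} (ht : 2 ≤ t) (htk : t ^ 4 ≤ k) (hkt : k ≤ (t + 1) ^ 4) :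
    |((evS (allOne k) m).card : ℝ) / ((2 : ℝ) ^ k) ^ m -
      (bFn (k - 2) (m - 1) : ℝ) / 2 ^ (m - 1)| ≤ 2 / (t : ℝ) + ((t : ℝ) + 1) ^ 12 / 2 ^ t := by
  have h8 : 8 * t ≤ t ^ 4 := by
    have : 8 ≤ t ^ 3 := by calc 8 = 2 ^ 3 := by norm_num
      _ ≤ t ^ 3 := Nat.pow_le_pow_left ht 3
    calc 8 * t ≤ t ^ 3 * t := Nat.mul_le_mul_right _ this
      _ = t ^ 4 := by ring
  have hk2 : 2 ≤ k := by omega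
  have htR : (2 : ℝ) ≤ t := by exact_mod_cast ht
  have ht4R : (t : ℝ) ^ 4 ≤ k := by exact_mod_cast htk
  have hkR : (2 : ℝ) ≤ k := by exact_mod_cast hk2
  have hu : allOne k ≠ 0 := by
    intro h
    have := congrFun h ⟨0, by omega⟩
    simp [allOne] at this
  have hN : (0 : ℝ) < ((2 : ℝ) ^ k) ^ m := by positivity
  have h2m : (0 : ℝ) < 2 ^ m := by positivity
  obtain ⟨hp1, hp2⟩ := p_bounds (k - 2) m
  rw [show k - 2 + 1 = k - 1 by omega] at hp2
  set P : ℝ := ((evS (allOne k) m).card : ℝ) / ((2 : ℝ) ^ k) ^ m with hP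
  set p : ℝ := (bFn (k - 2) (m - 1) : ℝ) / 2 ^ (m - 1) with hp
  have hP0 : 0 ≤ P := by positivity
  have hp0 : 0 ≤ p := by positivity
  have hPu : P ≤ (bFn (k - 1) m : ℝ) / 2 ^ m := by
    rw [hP, div_le_div_iff₀ hN h2m]
    have := ev_upper (m := m) (by omega) (allOne k) hu
    have h : (2 : ℝ) ^ m * (evS (allOne k) m).card ≤ (2 ^ k) ^ m * bFn (k - 1) m := by exact_mod_cast this
    linarith
  have hnn : (0 : ℝ) ≤ ((t : ℝ) + 1) ^ 12 / 2 ^ t := by positivity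
  by_cases hmk : k ^ 3 ≤ m
  · -- large `m`
    have hb : (bFn (k - 1) m : ℝ) / 2 ^ m ≤ 2 / t := by
      have hT := fun i => choose_T m i (k * t ^ 2) (by positivity) (by
        have : ((k : ℝ)) ^ 3 ≤ m := by exact_mod_cast hmk
        calc ((k : ℝ) * t ^ 2) ^ 2 = (k : ℝ) ^ 2 * (t : ℝ) ^ 4 := by ring
          _ ≤ (k : ℝ) ^ 2 * k := by gcongr
          _ = (k : ℝ) ^ 3 := by ring
          _ ≤ (m : ℝ) := this)
      have hs : (bFn (k - 1) m : ℝ) ≤ k * (2 ^ m / (k * t ^ 2)) := by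
        unfold bFn
        push_cast
        calc _ ≤ ∑ i ∈ Finset.range (k - 1 + 1), (2 : ℝ) ^ m / (k * t ^ 2) :=
              Finset.sum_le_sum (fun i _ => hT i)
          _ = _ := by
            rw [Finset.sum_const, Finset.card_range, nsmul_eq_mul, show k - 1 + 1 = k by omega]
      rw [div_le_iff₀ h2m]
      refine hs.trans ?_
      have : (k : ℝ) * (2 ^ m / (k * t ^ 2)) = 1 / t / t * 2 ^ m := by field_simp
      rw [this]
      gcongr
      rw [div_le_iff₀ (by positivity)]
      nlinarith
    rw [abs_le]
    constructor <;> linarith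
  · -- small `m`
    push Not at hmk
    set s := k - 1 - t with hs
    have hlow : (bFn s m : ℝ) / 2 ^ m ≤ P + (m : ℝ) / 2 ^ t := by
      have h := ev_lower (k := k) (m := m) (allOne k) s
      have h' : (bFn s m : ℝ) * (2 ^ k) ^ m * 2 ^ k ≤ 2 ^ m * (evS (allOne k) m).card * 2 ^ k
        + 2 ^ m * (m * 2 ^ (s + 1) * (2 ^ k) ^ m) := by exact_mod_cast h
      have hk' : (2 : ℝ) ^ k = 2 ^ (s + 1) * 2 ^ t := by rw [← pow_add]; congr 1; omega
      have hE : ((evS (allOne k) m).card : ℝ) = P * (2 ^ k) ^ m := by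
        rw [hP, div_mul_cancel₀ _ hN.ne']
      rw [hE] at h'
      rw [div_le_iff₀ h2m]
      have hpos : (0 : ℝ) < (2 ^ k) ^ m * 2 ^ k := by positivity
      apply le_of_mul_le_mul_right _ hpos
      have h2 : (P + (m : ℝ) / 2 ^ t) * 2 ^ m * ((2 ^ k) ^ m * 2 ^ k) =
        2 ^ m * (P * (2 ^ k) ^ m) * 2 ^ k + 2 ^ m * (m * (2 ^ k / 2 ^ t) * (2 ^ k) ^ m) := by
        field_simp
      have h3 : (2 : ℝ) ^ k / 2 ^ t = 2 ^ (s + 1) := by rw [hk']; field_simp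
      rw [h2, h3]
      linarith
    have hmt : (m : ℝ) / 2 ^ t ≤ ((t : ℝ) + 1) ^ 12 / 2 ^ t := by
      gcongr
      have : m ≤ (t + 1) ^ 12 := by
        calc m ≤ k ^ 3 := hmk.le
          _ ≤ ((t + 1) ^ 4) ^ 3 := Nat.pow_le_pow_left hkt 3
          _ = _ := by ring
      exact_mod_cast this
    have hgap : (bFn (k - 1) m : ℝ) / 2 ^ m ≤ (bFn s m : ℝ) / 2 ^ m + 2 / t := by
      have hsplit : (bFn (k - 1) m : ℝ) = bFn s m + ∑ i ∈ Finset.Ico (s + 1) k, (m.choose i : ℝ) := by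
        unfold bFn
        push_cast
        rw [show k - 1 + 1 = k by omega, Finset.sum_range_add_sum_Ico _ (by omega)]
      have hsum : ∑ i ∈ Finset.Ico (s + 1) k, (m.choose i : ℝ) ≤ 2 / t * 2 ^ m := by
        by_cases hms : m ≤ s
        · rw [Finset.sum_eq_zero]
          · positivity
          · intro i hi
            rw [Finset.mem_Ico] at hi
            rw [Nat.choose_eq_zero_of_lt (by omega)]; simp
        · have hT := fun i => choose_T m i (t ^ 2 / 2) (by positivity) (by
            have h1 : k ≤ m + t := by omega
            have h1' : (k : ℝ) ≤ m + t := by exact_mod_cast h1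
            have h8' : 8 * (t : ℝ) ≤ t ^ 4 := by exact_mod_cast h8
            calc ((t : ℝ) ^ 2 / 2) ^ 2 = t ^ 4 / 4 := by ring
              _ ≤ (m : ℝ) := by linarith)
          calc _ ≤ ∑ i ∈ Finset.Ico (s + 1) k, (2 : ℝ) ^ m / (t ^ 2 / 2) :=
                Finset.sum_le_sum (fun i _ => hT i)
            _ = t * ((2 : ℝ) ^ m / (t ^ 2 / 2)) := by
              rw [Finset.sum_const, Nat.card_Ico, nsmul_eq_mul, show k - (s + 1) = t by omega]
            _ = 2 / t * 2 ^ m := by field_simp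
            _ ≤ _ := le_rfl
      rw [hsplit, add_div]
      apply add_le_add le_rfl
      rwa [div_le_iff₀ h2m]
    have hmono : (bFn s m : ℝ) / 2 ^ m ≤ (bFn (k - 2) m : ℝ) / 2 ^ m := by
      gcongr
      exact bFn_mono (by omega) m
    rw [abs_le]
    constructor <;> linarith

-- STATEMENT 14
theorem statement14 (m : ℕ → ℕ)
    (hm : Tendsto (fun k => (m k : ℝ) / (2 : ℝ) ^ ((k : ℝ) / 2)) atTop (nhds 0)) :
    Tendsto (fun k => tau k (m k) - (bFn (k - 2) (m k - 1) : ℝ) / 2 ^ (m k - 1))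
      atTop (nhds 0) := by
  have hsq : Tendsto Nat.sqrt atTop atTop := by
    apply Filter.tendsto_atTop_mono' _ _ (Filter.tendsto_atTop_atTop.2 (fun b => ⟨b ^ 2, fun a ha =>
      Nat.le_sqrt'.2 ha⟩))
    exact Filter.Eventually.of_forall (fun _ => le_rfl)
  have ht : Tendsto (fun k : ℕ => Nat.sqrt (Nat.sqrt k)) atTop atTop := hsq.comp hsq
  have hlim1 : Tendsto (fun t : ℕ => 2 / (t : ℝ) + ((t : ℝ) + 1) ^ 12 / 2 ^ t) atTop (nhds 0) := by
    have a : Tendsto (fun t : ℕ => 2 / (t : ℝ)) atTop (nhds 0) :=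
      tendsto_const_div_atTop_nhds_zero_nat 2
    have b := (tendsto_pow_const_div_const_pow_of_one_lt 12 (r := (2 : ℝ)) (by norm_num)).comp
      (tendsto_add_atTop_nat 1)
    have b' := b.const_mul 2
    have c := a.add b'
    simp only [mul_zero, add_zero] at c
    refine c.congr (fun t => ?_)
    simp only [Function.comp_apply]
    push_cast
    rw [pow_succ (2 : ℝ) t]
    field_simp
  have hlim2 : Tendsto (fun k : ℕ => 3 * ((m k : ℝ) / (2 : ℝ) ^ ((k : ℝ) / 2)) ^ 2) atTop (nhds 0) := by
    have := (hm.pow 2).const_mul 3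
    simpa using this
  have hlim := hlim2.add (hlim1.comp ht)
  rw [add_zero] at hlim
  apply squeeze_zero_norm' _ hlim
  filter_upwards [ht.eventually_ge_atTop 2, Filter.eventually_ge_atTop 1] with k hk2 hk1
  set t := Nat.sqrt (Nat.sqrt k) with htdef
  have h1 : t ^ 4 ≤ k := by
    calc t ^ 4 = (t ^ 2) ^ 2 := by ring
      _ ≤ (Nat.sqrt k) ^ 2 := Nat.pow_le_pow_left (Nat.sqrt_le' _) 2
      _ ≤ k := Nat.sqrt_le' _
  have h2 : k ≤ (t + 1) ^ 4 := by
    have a : Nat.sqrt k + 1 ≤ (t + 1) ^ 2 := Nat.lt_succ_sqrt' _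
    have b : k < (Nat.sqrt k + 1) ^ 2 := Nat.lt_succ_sqrt' _
    calc k ≤ (Nat.sqrt k + 1) ^ 2 := b.le
      _ ≤ ((t + 1) ^ 2) ^ 2 := Nat.pow_le_pow_left a 2
      _ = _ := by ring
  have hA := tau_approx hk1 (m k)
  have hB := iid_approx (m := m k) hk2 h1 h2
  have hC : ((m k : ℝ) * m k + 2 * m k) / (2 : ℝ) ^ k ≤
      3 * ((m k : ℝ) / (2 : ℝ) ^ ((k : ℝ) / 2)) ^ 2 := by
    have e : ((2 : ℝ) ^ ((k : ℝ) / 2)) ^ 2 = 2 ^ k := by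
      rw [← Real.rpow_natCast, ← Real.rpow_mul (by norm_num)]
      norm_num
    rw [div_pow, e, ← mul_div_assoc]
    gcongr
    have : (m k : ℝ) ≤ m k * m k := by exact_mod_cast Nat.le_mul_self (m k)
    nlinarith
  rw [Real.norm_eq_abs]
  refine (abs_sub_le _ (((evS (allOne k) (m k)).card : ℝ) / ((2 : ℝ) ^ k) ^ (m k)) _).trans ?_
  exact add_le_add (hA.trans hC) hB

end
end
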